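/- arXiv:2406.16683 — 2 statements merged into one kernel-verified Lean document; each statement's English description precedes it below -/
import Mathlib

section
/- Let q and p be two admissible VP densities on [0,T] × ℝᵈ for a continuous function β : [0,T] → ℝ, satisfying the regularity assumptions, and assume t ↦ β(t)·I(t) is integrable on [0,T]. Then the score-matching integral over the diffusion trajectory equals a difference of Kullback–Leibler divergences: ∫₀ᵀ (β(t)/2)·I(t) dt = KL(0) − KL(T). In particular, if KL(T) = 0 then KL(0) = ∫₀ᵀ (β(t)/2)·I(t) dt. -/
/-!
Formally, `d/dt ∫ q log (q/p) = ∫ (log (q/p) ∂ₜq + (1 - q/p) ∂ₜp) = -(β/2) ∫ q |∇ log (q/p)|²` after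
an integration by parts. Two points need care: the densities are only separately regular in `t` and
in `x`, so time derivatives cannot be moved under spatial integrals by local domination; and no
decay at infinity is available beyond integrability.

*Weak form.* Scheffé's lemma makes `t ↦ q(t)` continuous in `L¹`. For `β` of constant sign, the
identity `d/dt ∫ φ q = ∫ φ ∂ₜq` holds for every compactly supported `C²` function `φ`
(`Sol.WF_of_nonneg`, `Sol.WF_of_nonpos`). By Baire's theorem, any closed set of points near which it
fails contains a relatively open piece on which `∂ₜq` is bounded uniformly in time, and there an
`L¹` comparison argument (`Sol.kato`) controls the difference quotients uniformly.

*Entropy.* The density `η = q log (q/p) - q + p` is jointly convex in `(q, p)`, so freezing its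
tangent plane at time `t` gives a lower bound for `∫ χ η(s)` that touches it at `s = t` and whose
derivative is given by the weak form. `integral_eq_sub_of_touch` turns this into an integrated
identity for each cutoff `χ` (`Pair.local_identity`), and the cutoffs are removed by dominated
convergence because `Δχ - x · ∇χ` stays bounded for rescaled cutoffs (`Pair.identity`).

*Conclusion.* On intervals where `β` has constant sign, `KL` is a primitive of `-(β/2) I`. By
Lebesgue differentiation `KL' = -(β/2) I` almost everywhere on `{β ≠ 0}`, while on `{β = 0}` the
prescribed derivative vanishes (`ae_deriv_eq`). Hence `KL'`, which exists everywhere, is integrable,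
and the fundamental theorem of calculus gives the claim.
-/

open MeasureTheory Real Set

/-- Divergence of a vector field on `ℝᵈ` (Euclidean space): `div V x = ∑ i ∂ᵢ Vᵢ(x)`. -/
noncomputable def diverg {d : ℕ} (V : EuclideanSpace ℝ (Fin d) → EuclideanSpace ℝ (Fin d))
    (x : EuclideanSpace ℝ (Fin d)) : ℝ :=
  ∑ i, fderiv ℝ V x (EuclideanSpace.single i 1) i

/-- The VP Fokker–Planck flux field `y ↦ y·u(t,y) + ∇_x u(t,y)`. -/
noncomputable def vpField {d : ℕ} (u : ℝ → EuclideanSpace ℝ (Fin d) → ℝ) (t : ℝ)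
    (y : EuclideanSpace ℝ (Fin d)) : EuclideanSpace ℝ (Fin d) :=
  u t y • y + gradient (fun z => u t z) y

/-- `u` is an admissible VP density on `[0,T] × ℝᵈ` for `β`: strictly positive, `C¹` in time,
`C²` in space, with unit mass, satisfying the variance-preserving Fokker–Planck equation
`∂_t u = (β(t)/2) div_x (x u + ∇_x u)`. -/
structure AdmissibleVP (d : ℕ) (T : ℝ) (β : ℝ → ℝ)
    (u : ℝ → EuclideanSpace ℝ (Fin d) → ℝ) : Prop where
  pos : ∀ t ∈ Icc (0 : ℝ) T, ∀ x, 0 < u t x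
  contDiff_t : ∀ x, ContDiff ℝ 1 (fun t => u t x)
  contDiff_x : ∀ t ∈ Icc (0 : ℝ) T, ContDiff ℝ 2 (fun x => u t x)
  mass_one : ∀ t ∈ Icc (0 : ℝ) T, ∫ x, u t x = 1
  fokkerPlanck : ∀ t ∈ Icc (0 : ℝ) T, ∀ x,
    deriv (fun s => u s x) t = (β t / 2) * diverg (vpField u t) x

/-- The KL divergence `KL(t) = ∫ q(t,x) log (q(t,x)/p(t,x)) dx`. -/
noncomputable def KLt {d : ℕ} (q p : ℝ → EuclideanSpace ℝ (Fin d) → ℝ) (t : ℝ) : ℝ :=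
  ∫ x, q t x * Real.log (q t x / p t x)

/-- The relative Fisher information
`I(t) = ∫ q(t,x) ‖∇_x log q(t,x) − ∇_x log p(t,x)‖² dx`. -/
noncomputable def relFisher {d : ℕ} (q p : ℝ → EuclideanSpace ℝ (Fin d) → ℝ) (t : ℝ) : ℝ :=
  ∫ x, q t x *
    ‖gradient (fun y => Real.log (q t y)) x - gradient (fun y => Real.log (p t y)) x‖ ^ 2

/-- The regularity assumptions on the pair `(q, p)`: integrability of the KL and Fisher
integrands, differentiation of `KL` under the integral sign, and vanishing boundary terms. -/
structure VPReg (d : ℕ) (T : ℝ) (q p : ℝ → EuclideanSpace ℝ (Fin d) → ℝ) : Prop where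
  int_kl : ∀ t ∈ Icc (0 : ℝ) T,
    Integrable (fun x => q t x * |Real.log (q t x / p t x)|)
  int_fisher : ∀ t ∈ Icc (0 : ℝ) T,
    Integrable (fun x => q t x *
      ‖gradient (fun y => Real.log (q t y)) x - gradient (fun y => Real.log (p t y)) x‖ ^ 2)
  kl_hasDeriv : ∀ t ∈ Icc (0 : ℝ) T,
    HasDerivAt (KLt q p) (∫ x, deriv (fun s => q s x * Real.log (q s x / p s x)) t) t
  boundary_q : ∀ t ∈ Icc (0 : ℝ) T,
    ∫ x, diverg (fun y => (1 + Real.log (q t y / p t y)) • vpField q t y) x = 0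
  boundary_p : ∀ t ∈ Icc (0 : ℝ) T,
    ∫ x, diverg (fun y => (q t y / p t y) • vpField p t y) x = 0

open Filter Topology
open scoped ContDiff

namespace VPKL

variable {d : ℕ}

/-! ### The Fokker–Planck operator and its adjoint -/

/-- The partial derivative `∂ᵢ v`. -/
noncomputable def pd (i : Fin d) (v : EuclideanSpace ℝ (Fin d) → ℝ)
    (x : EuclideanSpace ℝ (Fin d)) : ℝ :=
  fderiv ℝ v x (EuclideanSpace.single i 1)

/-- The Fokker–Planck operator `L* v = div (x v + ∇ v)`, written out as
`∑ᵢ (v + xᵢ ∂ᵢ v + ∂ᵢ∂ᵢ v)`. -/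
noncomputable def opS (v : EuclideanSpace ℝ (Fin d) → ℝ) (x : EuclideanSpace ℝ (Fin d)) : ℝ :=
  ∑ i, (v x + x i * pd i v x + pd i (pd i v) x)

/-- The formal adjoint `L φ = Δ φ - x · ∇ φ` of `opS`. -/
noncomputable def opT (v : EuclideanSpace ℝ (Fin d) → ℝ) (x : EuclideanSpace ℝ (Fin d)) : ℝ :=
  ∑ i, (pd i (pd i v) x - x i * pd i v x)

lemma pd_add {i : Fin d} {f g : EuclideanSpace ℝ (Fin d) → ℝ} {x}
    (hf : DifferentiableAt ℝ f x) (hg : DifferentiableAt ℝ g x) :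
    pd i (fun y => f y + g y) x = pd i f x + pd i g x := by
  simp [pd, fderiv_fun_add hf hg]

lemma pd_sub {i : Fin d} {f g : EuclideanSpace ℝ (Fin d) → ℝ} {x}
    (hf : DifferentiableAt ℝ f x) (hg : DifferentiableAt ℝ g x) :
    pd i (fun y => f y - g y) x = pd i f x - pd i g x := by
  simp [pd, fderiv_fun_sub hf hg]

lemma pd_sub_const {i : Fin d} {f : EuclideanSpace ℝ (Fin d) → ℝ} {x} (c : ℝ) :
    pd i (fun y => f y - c) x = pd i f x := by
  rw [pd, pd, fderiv_sub_const]

lemma pd_mul {i : Fin d} {f g : EuclideanSpace ℝ (Fin d) → ℝ} {x}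
    (hf : DifferentiableAt ℝ f x) (hg : DifferentiableAt ℝ g x) :
    pd i (fun y => f y * g y) x = f x * pd i g x + g x * pd i f x := by
  simp [pd, fderiv_fun_mul hf hg]

lemma pd_comp {i : Fin d} {f : EuclideanSpace ℝ (Fin d) → ℝ} {x} {Φ : ℝ → ℝ} {Φ1 : ℝ}
    (hΦ : HasDerivAt Φ Φ1 (f x)) (hf : DifferentiableAt ℝ f x) :
    pd i (fun y => Φ (f y)) x = Φ1 * pd i f x := by
  have := (hΦ.comp_hasFDerivAt x hf.hasFDerivAt).fderiv
  simp only [pd]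
  rw [show (fun y => Φ (f y)) = Φ ∘ f from rfl, this]
  simp

lemma pd_coord (i : Fin d) (x : EuclideanSpace ℝ (Fin d)) :
    pd i (fun y => y i) x = 1 := by
  have : (fun y : EuclideanSpace ℝ (Fin d) => y i) = (EuclideanSpace.proj i : _ →L[ℝ] ℝ) := by
    ext y; simp
  rw [pd, this, ContinuousLinearMap.fderiv]; simp

lemma contDiff_coord (i : Fin d) {n : WithTop ℕ∞} :
    ContDiff ℝ n (fun y : EuclideanSpace ℝ (Fin d) => y i) := by
  fun_prop

lemma contDiff_pd {i : Fin d} {f : EuclideanSpace ℝ (Fin d) → ℝ} {m n : WithTop ℕ∞}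
    (hf : ContDiff ℝ n f) (hmn : m + 1 ≤ n) : ContDiff ℝ m (pd i f) :=
  (hf.fderiv_right hmn).clm_apply contDiff_const

lemma contDiff_pd1 {i : Fin d} {f : EuclideanSpace ℝ (Fin d) → ℝ}
    (hf : ContDiff ℝ 2 f) : ContDiff ℝ 1 (pd i f) :=
  contDiff_pd hf (by norm_num)

lemma continuous_pd {i : Fin d} {f : EuclideanSpace ℝ (Fin d) → ℝ}
    (hf : ContDiff ℝ 1 f) : Continuous (pd i f) :=
  (contDiff_pd (m := 0) hf (by norm_num)).continuous

lemma continuous_opS {f : EuclideanSpace ℝ (Fin d) → ℝ} (hf : ContDiff ℝ 2 f) :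
    Continuous (opS f) := by
  unfold opS
  refine continuous_finsetSum _ fun i _ => ?_
  have h1 := continuous_pd (i := i) (hf.of_le (by norm_num))
  have h2 := continuous_pd (i := i) (contDiff_pd1 (i := i) hf)
  have h3 := hf.continuous
  fun_prop

lemma continuous_opT {f : EuclideanSpace ℝ (Fin d) → ℝ} (hf : ContDiff ℝ 2 f) :
    Continuous (opT f) := by
  unfold opT
  refine continuous_finsetSum _ fun i _ => ?_
  have h1 := continuous_pd (i := i) (hf.of_le (by norm_num))
  have h2 := continuous_pd (i := i) (contDiff_pd1 (i := i) hf)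
  fun_prop

lemma tsupport_pd {i : Fin d} {f : EuclideanSpace ℝ (Fin d) → ℝ} :
    tsupport (pd i f) ⊆ tsupport f :=
  (closure_mono (fun x hx => by
    simp only [Function.mem_support, pd] at hx ⊢
    intro h; exact hx (by simp [h]))).trans (tsupport_fderiv_subset ℝ (f := f))

lemma hasCompactSupport_pd {i : Fin d} {f : EuclideanSpace ℝ (Fin d) → ℝ}
    (hf : HasCompactSupport f) : HasCompactSupport (pd i f) :=
  hf.mono' ((subset_tsupport _).trans tsupport_pd)

lemma opT_eq_zero {f : EuclideanSpace ℝ (Fin d) → ℝ} {x} (hx : x ∉ tsupport f) :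
    opT f x = 0 := by
  have h1 : ∀ i, pd i f x = 0 := fun i =>
    image_eq_zero_of_notMem_tsupport (fun h => hx (tsupport_pd h))
  have h2 : ∀ i, pd i (pd i f) x = 0 := fun i =>
    image_eq_zero_of_notMem_tsupport (fun h => hx (tsupport_pd (tsupport_pd h)))
  simp [opT, h1, h2]

lemma hasCompactSupport_opT {f : EuclideanSpace ℝ (Fin d) → ℝ}
    (hf : HasCompactSupport f) : HasCompactSupport (opT f) :=
  HasCompactSupport.intro hf fun _ hx => opT_eq_zero hx

lemma ibp (i : Fin d) {f g : EuclideanSpace ℝ (Fin d) → ℝ} (hf : ContDiff ℝ 1 f)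
    (hfc : HasCompactSupport f) (hg : ContDiff ℝ 1 g) :
    ∫ x, f x * pd i g x = - ∫ x, pd i f x * g x := by
  have a1 := continuous_pd (i := i) hf
  have a2 := continuous_pd (i := i) hg
  have a3 := hasCompactSupport_pd (i := i) hfc
  refine integral_mul_fderiv_eq_neg_fderiv_mul_of_integrable ?_ ?_ ?_ ?_ ?_
  · exact (a1.mul hg.continuous).integrable_of_hasCompactSupport a3.mul_right
  · exact (hf.continuous.mul a2).integrable_of_hasCompactSupport hfc.mul_right
  · exact (hf.continuous.mul hg.continuous).integrable_of_hasCompactSupport hfc.mul_right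
  · exact fun x _ => (hf.differentiable (by norm_num)).differentiableAt
  · exact fun x _ => (hg.differentiable (by norm_num)).differentiableAt

/-- `opT` is the adjoint of `opS` against compactly supported test functions. -/
lemma integral_mul_opS {φ v : EuclideanSpace ℝ (Fin d) → ℝ} (hφ : ContDiff ℝ 2 φ)
    (hφc : HasCompactSupport φ) (hv : ContDiff ℝ 2 v) :
    ∫ x, φ x * opS v x = ∫ x, v x * opT φ x := by
  have hφ1 : ContDiff ℝ 1 φ := hφ.of_le (by norm_num)
  have hv1 : ContDiff ℝ 1 v := hv.of_le (by norm_num)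
  have key : ∀ i : Fin d, ∫ x, φ x * (v x + x i * pd i v x + pd i (pd i v) x)
      = ∫ x, v x * (pd i (pd i φ) x - x i * pd i φ x) := by
    intro i
    have c1 := continuous_pd (i := i) hφ1
    have c2 := continuous_pd (i := i) hv1
    have c3 := continuous_pd (i := i) (contDiff_pd1 (i := i) hφ)
    have s1 := hasCompactSupport_pd (i := i) hφc
    have s2 := hasCompactSupport_pd (i := i) s1
    have hc : ContDiff ℝ 1 (fun y : EuclideanSpace ℝ (Fin d) => y i * v y + pd i v y) :=
      ((contDiff_coord i).mul hv1).add (contDiff_pd1 hv)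
    have e1 : ∀ x, φ x * (v x + x i * pd i v x + pd i (pd i v) x)
        = φ x * pd i (fun y => y i * v y + pd i v y) x := by
      intro x
      rw [pd_add, pd_mul, pd_coord]
      · ring
      · exact (contDiff_coord i (n := 1)).differentiable (by norm_num) x
      · exact hv1.differentiable (by norm_num) x
      · exact ((contDiff_coord i (n := 1)).mul hv1).differentiable (by norm_num) x
      · exact (contDiff_pd1 hv).differentiable (by norm_num) x
    rw [integral_congr_ae (Eventually.of_forall e1), ibp i hφ1 hφc hc]
    have i1 : Integrable (fun x => pd i φ x * (x i * v x)) := by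
      refine Continuous.integrable_of_hasCompactSupport ?_ s1.mul_right
      have := hv.continuous
      fun_prop
    have i2 : Integrable (fun x => pd i φ x * pd i v x) :=
      (c1.mul c2).integrable_of_hasCompactSupport s1.mul_right
    have i3 : Integrable (fun x => pd i (pd i φ) x * v x) :=
      (c3.mul hv.continuous).integrable_of_hasCompactSupport s2.mul_right
    have e2 : ∫ x, pd i φ x * (x i * v x + pd i v x)
        = (∫ x, pd i φ x * (x i * v x)) + ∫ x, pd i φ x * pd i v x := by
      rw [← integral_add i1 i2]; congr 1; ext x; ring
    rw [e2, ibp i (contDiff_pd1 hφ) s1 hv1]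
    rw [neg_add, neg_neg, add_comm, ← sub_eq_add_neg, ← integral_sub i3 i1]
    congr 1; ext x; ring
  have hv0 := hv.continuous
  have hφ0 := hφ.continuous
  simp only [opS, opT, Finset.mul_sum]
  rw [integral_finsetSum, integral_finsetSum]
  · exact Finset.sum_congr rfl fun i _ => key i
  · intro i _
    have c1 := continuous_pd (i := i) hφ1
    have c3 := continuous_pd (i := i) (contDiff_pd1 (i := i) hφ)
    have s1 := hasCompactSupport_pd (i := i) hφc
    have s2 := hasCompactSupport_pd (i := i) s1
    refine Continuous.integrable_of_hasCompactSupport (by fun_prop) ?_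
    exact HasCompactSupport.mul_left (s2.sub (s1.mul_left (f := fun x => x i)))
  · intro i _
    have c2 := continuous_pd (i := i) hv1
    have c3 := continuous_pd (i := i) (contDiff_pd1 (i := i) hv)
    exact Continuous.integrable_of_hasCompactSupport (by fun_prop) hφc.mul_right

lemma gradient_apply {f : EuclideanSpace ℝ (Fin d) → ℝ} {x} (i : Fin d) :
    (gradient f x) i = pd i f x := by
  have : inner ℝ (gradient f x) (EuclideanSpace.single i (1 : ℝ)) = pd i f x := by
    simp [gradient, pd]
  rw [← this, EuclideanSpace.inner_single_right]
  simp

lemma diverg_vpField {u : ℝ → EuclideanSpace ℝ (Fin d) → ℝ} {t : ℝ}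
    (hu : ContDiff ℝ 2 (u t)) (x : EuclideanSpace ℝ (Fin d)) :
    diverg (vpField u t) x = opS (u t) x := by
  have hu1 : ContDiff ℝ 1 (u t) := hu.of_le (by norm_num)
  have hcomp : ∀ i, ContDiff ℝ 1 (fun y => vpField u t y i) := by
    intro i
    have : (fun y => vpField u t y i) = fun y => u t y * y i + pd i (u t) y := by
      ext y; simp [vpField, gradient_apply]
    rw [this]
    exact (hu1.mul (contDiff_coord i)).add (contDiff_pd1 hu)
  have hV : DifferentiableAt ℝ (vpField u t) x :=
    ((contDiff_euclidean (n := 1)).2 hcomp).differentiable (by norm_num) x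
  unfold diverg opS
  refine Finset.sum_congr rfl fun i _ => ?_
  have e1 : fderiv ℝ (vpField u t) x (EuclideanSpace.single i 1) i
      = pd i (fun y => vpField u t y i) x := by
    have := ((EuclideanSpace.proj i : EuclideanSpace ℝ (Fin d) →L[ℝ] ℝ).hasFDerivAt.comp x
      hV.hasFDerivAt).fderiv
    have h2 : (fun y => vpField u t y i)
        = (EuclideanSpace.proj i : EuclideanSpace ℝ (Fin d) →L[ℝ] ℝ) ∘ vpField u t := by
      ext y; simp
    simp only [pd]
    rw [h2, this]; simp
  have e2 : (fun y => vpField u t y i) = fun y => y i * u t y + pd i (u t) y := by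
    ext y; simp [vpField, gradient_apply, mul_comm]
  rw [e1, e2, pd_add, pd_mul, pd_coord]
  · ring
  · exact (contDiff_coord i (n := 1)).differentiable (by norm_num) x
  · exact hu1.differentiable (by norm_num) x
  · exact ((contDiff_coord i (n := 1)).mul hu1).differentiable (by norm_num) x
  · exact (contDiff_pd1 hu).differentiable (by norm_num) x

/-- `L*` of a convex-type composition: `Φ1(w) L* w = L*(Φ(w)) + d (w Φ1(w) - Φ(w)) - Φ2(w) |∇w|²`,
where `Φ1` and `Φ2` are the first two derivatives of `Φ`. -/
lemma opS_comp {w : EuclideanSpace ℝ (Fin d) → ℝ} (hw : ContDiff ℝ 2 w) {Φ Φ1 Φ2 : ℝ → ℝ}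
    (h1 : ∀ r, HasDerivAt Φ (Φ1 r) r) (h2 : ∀ r, HasDerivAt Φ1 (Φ2 r) r)
    (x : EuclideanSpace ℝ (Fin d)) :
    Φ1 (w x) * opS w x = opS (fun y => Φ (w y)) x + d * (w x * Φ1 (w x) - Φ (w x))
      - Φ2 (w x) * ∑ i, pd i w x ^ 2 := by
  have hd : Differentiable ℝ w := hw.differentiable (by norm_num)
  have e1 : ∀ i, pd i (fun y => Φ (w y)) = fun x => Φ1 (w x) * pd i w x := fun i => by
    ext x; exact pd_comp (h1 _) (hd x)
  have e2 : ∀ i, pd i (pd i (fun y => Φ (w y))) x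
      = Φ1 (w x) * pd i (pd i w) x + pd i w x * (Φ2 (w x) * pd i w x) := fun i => by
    rw [e1, pd_mul, pd_comp (h2 _) (hd x)]
    · exact ((h2 _).differentiableAt.comp x (hd x))
    · exact (contDiff_pd1 hw).differentiable (by norm_num) x
  have e3 : (d : ℝ) * (w x * Φ1 (w x) - Φ (w x)) = ∑ _i : Fin d, (w x * Φ1 (w x) - Φ (w x)) := by
    simp only [Finset.sum_const, Finset.card_univ, Fintype.card_fin, nsmul_eq_mul]
  rw [e3]
  simp only [opS, Finset.mul_sum, ← Finset.sum_add_distrib, ← Finset.sum_sub_distrib]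
  refine Finset.sum_congr rfl fun i _ => ?_
  rw [e2, e1]; ring

lemma opS_sub {f g : EuclideanSpace ℝ (Fin d) → ℝ} (hf : ContDiff ℝ 2 f) (hg : ContDiff ℝ 2 g)
    (c : ℝ) (x : EuclideanSpace ℝ (Fin d)) :
    opS (fun y => f y - g y - c) x = opS f x - opS g x - d * c := by
  have e1 : ∀ i, pd i (fun y => f y - g y - c) = fun x => pd i f x - pd i g x := fun i => by
    ext x
    rw [pd_sub_const, pd_sub (hf.differentiable (by norm_num) x)
      (hg.differentiable (by norm_num) x)]
  have e2 : ∀ i, pd i (pd i (fun y => f y - g y - c)) x = pd i (pd i f) x - pd i (pd i g) x :=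
    fun i => by
    rw [e1, pd_sub]
    · exact (contDiff_pd1 hf).differentiable (by norm_num) x
    · exact (contDiff_pd1 hg).differentiable (by norm_num) x
  have e3 : (d : ℝ) * c = ∑ _i : Fin d, c := by simp
  rw [e3]
  simp only [opS, ← Finset.sum_sub_distrib]
  refine Finset.sum_congr rfl fun i _ => ?_
  rw [e2, e1]; ring

lemma opS_neg {f : EuclideanSpace ℝ (Fin d) → ℝ} (x : EuclideanSpace ℝ (Fin d)) :
    opS (fun y => - f y) x = - opS f x := by
  have e : ∀ i (h : EuclideanSpace ℝ (Fin d) → ℝ), pd i (fun y => - h y) = fun x => - pd i h x :=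
    fun i h => by ext x; simp [pd, fderiv_fun_neg]
  simp only [opS, e, ← Finset.sum_neg_distrib]
  exact Finset.sum_congr rfl fun i _ => by ring

/-! ### One-sided Dini derivatives and Scheffé's lemma -/

/-- A continuous function whose upper right Dini derivative is at most an integrable `φ` grows at
most by the integral of `φ`. -/
lemma sub_le_integral_of_dini_right {g φ : ℝ → ℝ} {a b : ℝ} (hab : a ≤ b)
    (hcont : ContinuousOn g (Icc a b)) (φint : IntegrableOn φ (Icc a b))
    (hdini : ∀ t ∈ Ico a b, ∀ y, φ t < y → ∀ᶠ u in 𝓝[>] t, g u - g t ≤ (u - t) * y) :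
    g b - g a ≤ ∫ y in a..b, φ y := by
  refine le_of_forall_pos_le_add fun ε εpos => ?_
  -- A lower semicontinuous majorant `G` of `φ` with nearly the same integral.
  rcases exists_lt_lowerSemicontinuous_integral_lt φ φint εpos with
    ⟨G, f_lt_G, Gcont, Gint, Glt_top, hG⟩
  -- Real induction on `t` for the bound `g t - g a ≤ ∫ u in a..t, G u`.
  set s := {t | g t - g a ≤ ∫ u in a..t, (G u).toReal} ∩ Icc a b
  have s_closed : IsClosed s := by
    have : ContinuousOn (fun t => (g t - g a, ∫ u in a..t, (G u).toReal)) (Icc a b) := by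
      rw [← uIcc_of_le hab] at Gint hcont ⊢
      exact (hcont.sub continuousOn_const).prodMk (intervalIntegral.continuousOn_primitive_interval Gint)
    simp only [s, inter_comm]
    exact this.preimage_isClosed_of_isClosed isClosed_Icc OrderClosedTopology.isClosed_le'
  have main : Icc a b ⊆ {t | g t - g a ≤ ∫ u in a..t, (G u).toReal} := by
    refine s_closed.Icc_subset_of_forall_exists_gt
      (by simp only [intervalIntegral.integral_same, mem_ofPred_eq, sub_self, le_rfl]) fun t ht v t_lt_v => ?_
    obtain ⟨y, φ_lt_y, y_lt_G⟩ : ∃ y : ℝ, (φ t : EReal) < y ∧ (y : EReal) < G t :=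
      EReal.lt_iff_exists_real_btwn.1 (f_lt_G t)
    -- By lower semicontinuity, `G > y` on a right neighbourhood of `t`.
    have I1 : ∀ᶠ u in 𝓝[>] t, (u - t) * y ≤ ∫ w in t..u, (G w).toReal := by
      have B : ∀ᶠ u in 𝓝 t, (y : EReal) < G u := Gcont.lowerSemicontinuousAt _ _ y_lt_G
      rcases mem_nhds_iff_exists_Ioo_subset.1 B with ⟨m, M, ⟨hm, hM⟩, H⟩
      have : Ioo t (min M b) ∈ 𝓝[>] t := Ioo_mem_nhdsGT (lt_min hM ht.right.right)
      filter_upwards [this] with u hu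
      have I : Icc t u ⊆ Icc a b := Icc_subset_Icc ht.2.1 (hu.2.le.trans (min_le_right _ _))
      calc
        (u - t) * y = ∫ _ in Icc t u, y := by
          simp only [MeasureTheory.integral_const, MeasurableSet.univ, measureReal_restrict_apply,
            univ_inter, hu.left.le, Real.volume_real_Icc_of_le, smul_eq_mul]
        _ ≤ ∫ w in t..u, (G w).toReal := by
          rw [intervalIntegral.integral_of_le hu.1.le, ← integral_Icc_eq_integral_Ioc]
          apply setIntegral_mono_ae_restrict
          · simp
          · exact IntegrableOn.mono_set Gint I
          · have C1 : ∀ᵐ x : ℝ ∂volume.restrict (Icc t u), G x < ⊤ :=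
              ae_mono (Measure.restrict_mono I le_rfl) Glt_top
            have C2 : ∀ᵐ x : ℝ ∂volume.restrict (Icc t u), x ∈ Icc t u :=
              ae_restrict_mem measurableSet_Icc
            filter_upwards [C1, C2] with x Gx hx
            apply EReal.coe_le_coe_iff.1
            have : x ∈ Ioo m M := by
              simp only [hm.trans_le hx.left,
                (hx.right.trans_lt hu.right).trans_le (min_le_left M b), mem_Ioo, and_self_iff]
            refine (H this).out.le.trans_eq ?_
            exact (EReal.coe_toReal Gx.ne (f_lt_G x).ne_bot).symm
    have I2 : ∀ᶠ u in 𝓝[>] t, g u - g t ≤ (u - t) * y :=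
      hdini t ht.2 y (EReal.coe_lt_coe_iff.1 φ_lt_y)
    have I3 : ∀ᶠ u in 𝓝[>] t, g u - g t ≤ ∫ w in t..u, (G w).toReal := by
      filter_upwards [I1, I2] with u hu1 hu2 using hu2.trans hu1
    have I4 : ∀ᶠ u in 𝓝[>] t, u ∈ Ioc t (min v b) := Ioc_mem_nhdsGT <| lt_min t_lt_v ht.2.2
    rcases (I3.and I4).exists with ⟨x, hx, hxt⟩
    refine ⟨x, ?_, Ioc_subset_Ioc le_rfl (min_le_left _ _) hxt⟩
    calc
      g x - g a = g t - g a + (g x - g t) := by abel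
      _ ≤ (∫ w in a..t, (G w).toReal) + ∫ w in t..x, (G w).toReal := add_le_add ht.1 hx
      _ = ∫ w in a..x, (G w).toReal := by
        apply intervalIntegral.integral_add_adjacent_intervals
        · rw [intervalIntegrable_iff_integrableOn_Ioc_of_le ht.2.1]
          exact IntegrableOn.mono_set Gint
            (Ioc_subset_Icc_self.trans (Icc_subset_Icc le_rfl ht.2.2.le))
        · rw [intervalIntegrable_iff_integrableOn_Ioc_of_le hxt.1.le]
          apply IntegrableOn.mono_set Gint
          exact Ioc_subset_Icc_self.trans (Icc_subset_Icc ht.2.1 (hxt.2.trans (min_le_right _ _)))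
  calc
    g b - g a ≤ ∫ y in a..b, (G y).toReal := main (right_mem_Icc.2 hab)
    _ ≤ (∫ y in a..b, φ y) + ε := by
      convert! hG.le <;>
        · rw [intervalIntegral.integral_of_le hab]
          simp only [integral_Icc_eq_integral_Ioc', Real.volume_singleton]


/-- The reflection of `sub_le_integral_of_dini_right`, for upper left Dini derivatives. -/
lemma sub_le_integral_of_dini_left {f φ : ℝ → ℝ} {a b : ℝ} (hab : a ≤ b)
    (hcont : ContinuousOn f (Icc a b)) (φint : IntegrableOn φ (Icc a b))
    (hdini : ∀ t ∈ Ioc a b, ∀ y, φ t < y → ∀ᶠ u in 𝓝[<] t, f t - f u ≤ (t - u) * y) :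
    f b - f a ≤ ∫ y in a..b, φ y := by
  have hmaps : MapsTo (fun s : ℝ => a + b - s) (Icc a b) (Icc a b) := fun s hs =>
    ⟨by linarith [hs.2], by linarith [hs.1]⟩
  have hφ' : IntegrableOn (fun s => φ (a + b - s)) (Icc a b) := by
    rw [← intervalIntegrable_iff_integrableOn_Icc_of_le hab] at φint ⊢
    simpa using (φint.comp_sub_left (a + b)).symm
  have := sub_le_integral_of_dini_right (g := fun s => - f (a + b - s)) hab
    ((hcont.comp (by fun_prop) hmaps).neg) hφ' (fun t ht y hy => by
      have h1 := hdini (a + b - t) ⟨by linarith [ht.2], by linarith [ht.1]⟩ y hy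
      have h2 : Tendsto (fun u : ℝ => a + b - u) (𝓝[>] t) (𝓝[<] (a + b - t)) := by
        refine tendsto_nhdsWithin_iff.2 ⟨?_, ?_⟩
        · exact (Continuous.tendsto (by fun_prop) t).mono_left nhdsWithin_le_nhds
        · filter_upwards [self_mem_nhdsWithin] with u hu
          have : t < u := hu
          simp only [mem_Iio]; linarith
      filter_upwards [h2.eventually h1] with u hu
      have e : a + b - t - (a + b - u) = u - t := by ring
      rw [e] at hu
      linarith)
  have e : ∫ s in a..b, φ (a + b - s) = ∫ s in a..b, φ s := by
    rw [intervalIntegral.integral_comp_sub_left]; simp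
  rw [e] at this
  simp only [add_sub_cancel_right, add_sub_cancel_left] at this
  linarith

/-- Fundamental theorem of calculus for a function touched from below, at every time `t`, by a
function differentiable at `t` with derivative `φ t`. -/
lemma integral_eq_sub_of_touch {f φ : ℝ → ℝ} {H : ℝ → ℝ → ℝ} {a b : ℝ} (hab : a ≤ b)
    (hcont : ContinuousOn f (Icc a b)) (φint : IntegrableOn φ (Icc a b))
    (hH : ∀ t ∈ Icc a b, HasDerivWithinAt (H t) (φ t) (Icc a b) t)
    (hle : ∀ t ∈ Icc a b, ∀ s ∈ Icc a b, H t s - H t t ≤ f s - f t) :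
    f b - f a = ∫ y in a..b, φ y := by
  apply le_antisymm
  · refine sub_le_integral_of_dini_left hab hcont φint fun t ht y hy => ?_
    have ht' : t ∈ Icc a b := Ioc_subset_Icc_self ht
    have h1 : HasDerivWithinAt (H t) (φ t) (Iio t) t :=
      (hH t ht').mono_of_mem_nhdsWithin (mem_of_superset (Ioo_mem_nhdsLT ht.1)
        (fun s hs => ⟨hs.1.le, hs.2.le.trans ht.2⟩))
    have h2 := (hasDerivWithinAt_iff_tendsto_slope' (by simp)).1 h1
    filter_upwards [h2.eventually (gt_mem_nhds hy), self_mem_nhdsWithin,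
      Ioo_mem_nhdsLT ht.1] with s hs hst hs'
    have hst : s < t := hst
    have h3 := hle t ht' s ⟨hs'.1.le, hs'.2.le.trans ht.2⟩
    rw [slope_def_field, div_lt_iff_of_neg (by linarith)] at hs
    nlinarith
  · have h := sub_le_integral_of_dini_right (g := fun s => - f s) (φ := fun s => - φ s) hab
      hcont.neg φint.neg fun t ht y hy => ?_
    · rw [intervalIntegral.integral_neg] at h; linarith
    have ht' : t ∈ Icc a b := Ico_subset_Icc_self ht
    have h1 : HasDerivWithinAt (H t) (φ t) (Ioi t) t :=
      (hH t ht').mono_of_mem_nhdsWithin (mem_of_superset (Ioo_mem_nhdsGT ht.2)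
        (fun s hs => ⟨ht.1.trans hs.1.le, hs.2.le⟩))
    have h2 := (hasDerivWithinAt_iff_tendsto_slope' (by simp)).1 h1
    filter_upwards [h2.eventually (lt_mem_nhds (neg_lt.1 hy)), self_mem_nhdsWithin,
      Ioo_mem_nhdsGT ht.2] with s hs hst hs'
    have hst : t < s := hst
    have h3 := hle t ht' s ⟨ht.1.trans hs'.1.le, hs'.2.le⟩
    rw [slope_def_field, lt_div_iff₀ (by linarith)] at hs
    nlinarith

/-- Scheffé's lemma along a countably generated filter. -/
lemma scheffe {α ι : Type*} [MeasurableSpace α] {μ : Measure α} {l : Filter ι}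
    [l.IsCountablyGenerated] {f : ι → α → ℝ} {g : α → ℝ}
    (hf : ∀ᶠ i in l, Integrable (f i) μ) (hf0 : ∀ᶠ i in l, ∀ x, 0 ≤ f i x)
    (hg : Integrable g μ) (hg0 : ∀ x, 0 ≤ g x)
    (hlim : ∀ x, Tendsto (fun i => f i x) l (𝓝 (g x)))
    (hmass : Tendsto (fun i => ∫ x, f i x ∂μ) l (𝓝 (∫ x, g x ∂μ))) :
    Tendsto (fun i => ∫ x, |f i x - g x| ∂μ) l (𝓝 0) := by
  have h1 : Tendsto (fun i => ∫ x, max (g x - f i x) 0 ∂μ) l (𝓝 (∫ x, (0 : ℝ) ∂μ)) := by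
    refine tendsto_integral_filter_of_dominated_convergence g ?_ ?_ hg ?_
    · filter_upwards [hf] with i hi
      exact ((hg.sub hi).sup (integrable_zero _ _ _)).aestronglyMeasurable
    · filter_upwards [hf0] with i hi
      refine Eventually.of_forall fun x => ?_
      rw [Real.norm_of_nonneg (le_max_right _ _)]
      exact max_le (by linarith [hi x]) (hg0 x)
    · refine Eventually.of_forall fun x => ?_
      have := (tendsto_const_nhds (x := g x)).sub (hlim x)
      simpa using this.max (tendsto_const_nhds (x := (0 : ℝ)))
  have h2 : Tendsto (fun i => (∫ x, f i x ∂μ) - (∫ x, g x ∂μ)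
      + 2 * ∫ x, max (g x - f i x) 0 ∂μ) l (𝓝 0) := by
    have := (hmass.sub (tendsto_const_nhds (x := ∫ x, g x ∂μ))).add (h1.const_mul 2)
    simpa using this
  refine h2.congr' ?_
  filter_upwards [hf] with i hi
  have i3 : Integrable (fun x => max (g x - f i x) 0) μ := (hg.sub hi).sup (integrable_zero _ _ _)
  rw [← integral_sub hi hg, ← integral_const_mul, ← integral_add (f := fun x => f i x - g x) (hi.sub hg) (i3.const_mul 2)]
  refine integral_congr_ae (Eventually.of_forall fun x => ?_)
  simp only
  rcases le_total (g x) (f i x) with h | h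
  · rw [max_eq_right (by linarith), abs_of_nonneg (by linarith)]; ring
  · rw [max_eq_left (by linarith), abs_of_nonpos (by linarith)]; ring

/-! ### Cutoffs and a smooth convex approximation of the positive part -/

/-- A `C²` function with compact support. -/
structure Test (φ : EuclideanSpace ℝ (Fin d) → ℝ) : Prop where
  contDiff : ContDiff ℝ 2 φ
  compact : HasCompactSupport φ

lemma exists_cutoff {K O : Set (EuclideanSpace ℝ (Fin d))} (hK : IsCompact K) (hO : IsOpen O)
    (hKO : K ⊆ O) : ∃ χ : EuclideanSpace ℝ (Fin d) → ℝ, Test χ ∧ tsupport χ ⊆ O ∧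
      (∀ x ∈ K, χ x = 1) ∧ (∀ x, 0 ≤ χ x) := by
  obtain ⟨K', hK', h1, h2⟩ := exists_compact_between hK hO hKO
  obtain ⟨f, f1, f0, f2⟩ := exists_contMDiffMap_one_nhds_of_subset_interior
    (modelWithCornersSelf ℝ (EuclideanSpace ℝ (Fin d))) hK.isClosed h1 (n := 2)
  have hsupp : tsupport f ⊆ K' := closure_minimal (fun x hx => by
    by_contra h; exact hx (f0 x h)) hK'.isClosed
  exact ⟨f, ⟨f.contMDiff.contDiff, HasCompactSupport.of_support_subset_isCompact hK'
    ((subset_tsupport _).trans hsupp)⟩, hsupp.trans h2, fun x hx => f1.self_of_nhdsSet x hx,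
    fun x => (f2 x).1⟩

lemma integrable_mul_test {φ g : EuclideanSpace ℝ (Fin d) → ℝ} (hφ : Continuous φ)
    (hφc : HasCompactSupport φ) (hg : Continuous g) : Integrable (fun x => φ x * g x) :=
  (hφ.mul hg).integrable_of_hasCompactSupport hφc.mul_right

lemma exists_abs_le {φ : EuclideanSpace ℝ (Fin d) → ℝ} (hφ : Continuous φ)
    (hφc : HasCompactSupport φ) : ∃ C, 0 ≤ C ∧ ∀ x, |φ x| ≤ C := by
  obtain ⟨C, hC⟩ := hφc.exists_bound_of_continuous hφ
  exact ⟨max C 0, le_max_right _ _, fun x => (hC x).trans (le_max_left _ _)⟩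

lemma abs_integral_le_of_abs_le {f g : EuclideanSpace ℝ (Fin d) → ℝ} {C : ℝ}
    (hg : Integrable g) (h : ∀ x, |f x| ≤ C * |g x|) : |∫ x, f x| ≤ C * ∫ x, |g x| := by
  rw [← integral_const_mul]
  exact (norm_integral_le_integral_norm f).trans
    (integral_mono_of_nonneg (Eventually.of_forall fun x => norm_nonneg _)
      (hg.abs.const_mul C) (Eventually.of_forall h))

/-- A smooth convex approximation of the positive part at scale `ε`. -/
noncomputable def cvx (ε r : ℝ) : ℝ := ∫ s in (0 : ℝ)..r, smoothTransition (s / ε)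

lemma contDiff_st (ε : ℝ) {n : ℕ∞} : ContDiff ℝ n (fun r : ℝ => smoothTransition (r / ε)) :=
  smoothTransition.contDiff.comp (contDiff_id.div_const ε)

lemma hasDerivAt_cvx (ε r : ℝ) : HasDerivAt (cvx ε) (smoothTransition (r / ε)) r :=
  ((contDiff_st ε (n := 0)).continuous).integral_hasStrictDerivAt 0 r |>.hasDerivAt

lemma hasDerivAt_st (ε r : ℝ) : HasDerivAt (fun r : ℝ => smoothTransition (r / ε))
    (deriv (fun r : ℝ => smoothTransition (r / ε)) r) r :=
  (((contDiff_st ε (n := 1)).differentiable (by norm_num)) r).hasDerivAt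

lemma contDiff_cvx (ε : ℝ) : ContDiff ℝ 2 (cvx ε) := by
  rw [show (2 : WithTop ℕ∞) = 1 + 1 by norm_num, contDiff_succ_iff_deriv]
  refine ⟨fun r => (hasDerivAt_cvx ε r).differentiableAt, by simp, ?_⟩
  rw [show deriv (cvx ε) = fun r => smoothTransition (r / ε) from
    funext fun r => (hasDerivAt_cvx ε r).deriv]
  exact contDiff_st ε (n := 1)

lemma monotone_st {ε : ℝ} (hε : 0 < ε) : Monotone (fun r : ℝ => smoothTransition (r / ε)) :=
  fun r s h => smoothTransition.monotone (by gcongr)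

lemma deriv_st_nonneg {ε : ℝ} (hε : 0 < ε) (r : ℝ) :
    0 ≤ deriv (fun r : ℝ => smoothTransition (r / ε)) r :=
  (monotone_st hε).deriv_nonneg

lemma cvx_zero (ε : ℝ) : cvx ε 0 = 0 := by simp [cvx]

lemma cvx_tangent {ε : ℝ} (hε : 0 < ε) (r s : ℝ) :
    cvx ε r + smoothTransition (r / ε) * (s - r) ≤ cvx ε s := by
  have hc : Continuous (fun r : ℝ => smoothTransition (r / ε)) := (contDiff_st ε (n := 0)).continuous
  have e : cvx ε s - cvx ε r = ∫ y in r..s, smoothTransition (y / ε) :=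
    intervalIntegral.integral_interval_sub_left (hc.intervalIntegrable _ _)
      (hc.intervalIntegrable _ _)
  rcases le_total r s with h | h
  · have := intervalIntegral.integral_mono_on (μ := volume) h (intervalIntegrable_const)
      (hc.intervalIntegrable r s) (fun y hy => monotone_st hε hy.1)
    rw [intervalIntegral.integral_const] at this
    simp only [smul_eq_mul] at this
    linarith
  · have := intervalIntegral.integral_mono_on (μ := volume) h (hc.intervalIntegrable s r)
      (intervalIntegrable_const) (fun y hy => monotone_st hε hy.2)
    rw [intervalIntegral.integral_const, intervalIntegral.integral_symm] at this
    simp only [smul_eq_mul] at this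
    linarith

lemma cvx_nonneg {ε : ℝ} (hε : 0 < ε) (r : ℝ) : 0 ≤ cvx ε r := by
  have := cvx_tangent hε 0 r
  simpa [cvx_zero, smoothTransition.zero] using this

lemma cvx_le_mul {ε : ℝ} (hε : 0 < ε) (r : ℝ) : cvx ε r ≤ r * smoothTransition (r / ε) := by
  have := cvx_tangent hε r 0
  rw [cvx_zero] at this; linarith

lemma mul_st_le {ε : ℝ} (hε : 0 < ε) (r : ℝ) : r * smoothTransition (r / ε) ≤ max r 0 := by
  rcases le_total r 0 with h | h
  · rw [smoothTransition.zero_of_nonpos (div_nonpos_of_nonpos_of_nonneg h hε.le)]; simp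
  · rw [max_eq_left h]; exact mul_le_of_le_one_right h (smoothTransition.le_one _)

lemma le_cvx {ε : ℝ} (hε : 0 < ε) (r : ℝ) : max (r - ε) 0 ≤ cvx ε r := by
  refine max_le ?_ (cvx_nonneg hε r)
  have := cvx_tangent hε ε r
  rw [div_self hε.ne', smoothTransition.one] at this
  linarith [cvx_nonneg hε ε]

lemma abs_cvx_sub_le {ε : ℝ} (hε : 0 < ε) (r s : ℝ) : |cvx ε r - cvx ε s| ≤ |r - s| := by
  have h1 := cvx_tangent hε r s
  have h2 := cvx_tangent hε s r
  have a1 := smoothTransition.nonneg (r / ε)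
  have a2 := smoothTransition.le_one (r / ε)
  have a3 := smoothTransition.nonneg (s / ε)
  have a4 := smoothTransition.le_one (s / ε)
  have key : ∀ c y : ℝ, 0 ≤ c → c ≤ 1 → c * y ≤ |y| := fun c y h0 h1 =>
    (mul_le_mul_of_nonneg_left (le_abs_self y) h0).trans (mul_le_of_le_one_left (abs_nonneg y) h1)
  have k1 := key _ (r - s) a1 a2
  have k2 := key _ (s - r) a3 a4
  rw [abs_sub_comm s r] at k2
  rw [abs_le]; constructor <;> linarith

/-! ### Solutions and the weak form of the equation -/

/-- A solution `u` of `∂ₜ u = (β/2) L* u` on `[a, b]`, with time derivative `v`, in a form which is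
stable under `u ↦ -u` and under time reversal. -/
structure Sol (a b : ℝ) (β : ℝ → ℝ) (u v : ℝ → EuclideanSpace ℝ (Fin d) → ℝ) : Prop where
  β_cont : Continuous β
  hasDeriv : ∀ t x, HasDerivAt (fun s => u s x) (v t x) t
  v_cont : ∀ x, Continuous (fun t => v t x)
  contDiff : ∀ t ∈ Icc a b, ContDiff ℝ 2 (u t)
  int : ∀ t ∈ Icc a b, Integrable (u t)
  l1 : ∀ t ∈ Icc a b, Tendsto (fun s => ∫ x, |u s x - u t x|) (𝓝[Icc a b] t) (𝓝 0)
  pde : ∀ t ∈ Icc a b, ∀ x, v t x = β t / 2 * opS (u t) x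

/-- Differentiation under the integral sign against the test function `φ`. -/
def WF (a b : ℝ) (u v : ℝ → EuclideanSpace ℝ (Fin d) → ℝ)
    (φ : EuclideanSpace ℝ (Fin d) → ℝ) : Prop :=
  ∀ t ∈ Icc a b, HasDerivWithinAt (fun s => ∫ x, φ x * u s x) (∫ x, φ x * v t x) (Icc a b) t

section
variable {a b : ℝ} {β : ℝ → ℝ} {u v : ℝ → EuclideanSpace ℝ (Fin d) → ℝ}

lemma Sol.continuous_v (hS : Sol a b β u v) {t : ℝ} (ht : t ∈ Icc a b) : Continuous (v t) := by
  rw [show v t = fun x => β t / 2 * opS (u t) x from funext (hS.pde t ht)]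
  exact continuous_const.mul (continuous_opS (hS.contDiff t ht))

lemma Sol.neg (hS : Sol a b β u v) :
    Sol a b β (fun t x => - u t x) (fun t x => - v t x) where
  β_cont := hS.β_cont
  hasDeriv t x := (hS.hasDeriv t x).neg
  v_cont x := (hS.v_cont x).neg
  contDiff t ht := (hS.contDiff t ht).neg
  int t ht := (hS.int t ht).neg
  l1 t ht := by
    refine (hS.l1 t ht).congr fun s => ?_
    congr 1; ext x
    rw [← abs_neg]; congr 1; ring
  pde t ht x := by rw [hS.pde t ht, opS_neg]; ring

lemma Sol.reverse (hS : Sol a b β u v) :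
    Sol (-b) (-a) (fun t => - β (-t)) (fun t => u (-t)) (fun t x => - v (-t) x) where
  β_cont := (hS.β_cont.comp continuous_neg).neg
  hasDeriv t x := by
    have := (hS.hasDeriv (-t) x).comp t (hasDerivAt_neg t)
    simpa [Function.comp_def] using this
  v_cont x := ((hS.v_cont x).comp continuous_neg).neg
  contDiff t ht := hS.contDiff (-t) ⟨by linarith [ht.2], by linarith [ht.1]⟩
  int t ht := hS.int (-t) ⟨by linarith [ht.2], by linarith [ht.1]⟩
  l1 t ht := by
    refine (hS.l1 (-t) ⟨by linarith [ht.2], by linarith [ht.1]⟩).comp ?_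
    refine tendsto_nhdsWithin_iff.2 ⟨?_, ?_⟩
    · exact (continuous_neg.tendsto t).mono_left nhdsWithin_le_nhds
    · filter_upwards [self_mem_nhdsWithin] with s hs
      exact ⟨by linarith [hs.2], by linarith [hs.1]⟩
  pde t ht x := by
    rw [hS.pde (-t) ⟨by linarith [ht.2], by linarith [ht.1]⟩]; ring

lemma WF.of_reverse {φ : EuclideanSpace ℝ (Fin d) → ℝ}
    (h : WF (-b) (-a) (fun t => u (-t)) (fun t x => - v (-t) x) φ) : WF a b u v φ := by
  intro t ht
  have h1 := h (-t) ⟨by linarith [ht.2], by linarith [ht.1]⟩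
  have h2 := HasDerivWithinAt.scomp (h := fun s : ℝ => -s) (s := Icc a b) t h1
    (hasDerivAt_neg t).hasDerivWithinAt
    (fun s hs => ⟨by linarith [hs.2], by linarith [hs.1]⟩)
  simp only [Function.comp_def, neg_neg, smul_eq_mul, mul_neg, integral_neg, neg_mul, one_mul] at h2
  exact h2

lemma Sol.integral_mul_v (hS : Sol a b β u v) {t : ℝ} (ht : t ∈ Icc a b)
    {φ : EuclideanSpace ℝ (Fin d) → ℝ} (hφ : Test φ) :
    ∫ x, φ x * v t x = β t / 2 * ∫ x, u t x * opT φ x := by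
  rw [← integral_mul_opS hφ.contDiff hφ.compact (hS.contDiff t ht), ← integral_const_mul]
  congr 1; ext x; rw [hS.pde t ht]; ring

lemma Sol.continuousOn (hS : Sol a b β u v) {φ : EuclideanSpace ℝ (Fin d) → ℝ}
    (hφ : Continuous φ) (hφc : HasCompactSupport φ) :
    ContinuousOn (fun t => ∫ x, φ x * u t x) (Icc a b) := by
  intro t ht
  obtain ⟨C, hC0, hC⟩ := exists_abs_le hφ hφc
  refine tendsto_iff_norm_sub_tendsto_zero.2 ?_
  have h := (hS.l1 t ht).const_mul C
  rw [mul_zero] at h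
  refine tendsto_of_tendsto_of_tendsto_of_le_of_le' tendsto_const_nhds h
    (Eventually.of_forall fun s => norm_nonneg _) ?_
  filter_upwards [self_mem_nhdsWithin] with s hs
  rw [← integral_sub (integrable_mul_test hφ hφc (hS.contDiff s hs).continuous)
    (integrable_mul_test hφ hφc (hS.contDiff t ht).continuous)]
  refine abs_integral_le_of_abs_le ((hS.int s hs).sub (hS.int t ht)) fun x => ?_
  rw [← mul_sub, abs_mul]
  exact mul_le_mul_of_nonneg_right (hC x) (abs_nonneg _)

/-- A right derivative equal to the expected, continuous, expression upgrades to `WF`. -/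
lemma Sol.WF_of_right (hS : Sol a b β u v) (hab : a ≤ b) {φ : EuclideanSpace ℝ (Fin d) → ℝ}
    (hφ : Test φ) (hr : ∀ t ∈ Ico a b,
      HasDerivWithinAt (fun s => ∫ x, φ x * u s x) (∫ x, φ x * v t x) (Ioi t) t) :
    WF a b u v φ := by
  have hm := hS.continuousOn hφ.contDiff.continuous hφ.compact
  have hg : ContinuousOn (fun t => ∫ x, φ x * v t x) (Icc a b) := by
    have h1 := hS.continuousOn (continuous_opT hφ.contDiff) (hasCompactSupport_opT hφ.compact)
    refine ((hS.β_cont.div_const 2).continuousOn.mul h1).congr fun t ht => ?_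
    simp only [hS.integral_mul_v ht hφ, mul_comm (u t _), Pi.mul_apply]
  -- a continuous extension of the derivative to the whole line
  set G : ℝ → ℝ := fun t => ∫ x, φ x * v (projIcc a b hab t : ℝ) x with hG
  have hGc : Continuous G :=
    (continuousOn_iff_continuous_domRestrict.1 hg).comp continuous_projIcc
  have hGe : ∀ t ∈ Icc a b, G t = ∫ x, φ x * v t x := fun t ht => by
    simp only [hG, projIcc_of_mem hab ht]
  have key : ∀ t ∈ Icc a b, ∫ x, φ x * u t x = (∫ x, φ x * u a x) + ∫ s in a..t, G s := by
    intro t ht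
    have := intervalIntegral.integral_eq_sub_of_hasDeriv_right_of_le (f := fun s => ∫ x, φ x * u s x)
      (f' := G) ht.1 (hm.mono (Icc_subset_Icc le_rfl ht.2)) (fun s hs => by
        rw [hGe s ⟨hs.1.le, hs.2.le.trans ht.2⟩]
        exact hr s ⟨hs.1.le, hs.2.trans_le ht.2⟩) (hGc.intervalIntegrable _ _)
    rw [this]; ring
  intro t ht
  have h1 : HasDerivAt (fun t => (∫ x, φ x * u a x) + ∫ s in a..t, G s) (G t) t :=
    ((hGc.integral_hasStrictDerivAt a t).hasDerivAt).const_add _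
  rw [hGe t ht] at h1
  exact h1.hasDerivWithinAt.congr key (key t ht)

/-- Comparison in `L¹`: if the weak form is known away from the set where `|v| ≤ M`, then the
increments of `u` exceed a linear function of time only by a negligible amount. The proof
differentiates `∫ χ Φ(w)` with `w = u(t) - u(a') - k (t - a')` and `Φ` a smooth convex
approximation of the positive part: by convexity only the weak form with the test function
`χ · (dΦ/dw)(w)` is needed, and it is supported where `w ≥ 0`, hence away from `|v| ≤ M`. -/
lemma Sol.kato (hS : Sol a b β u v) (hβ0 : ∀ t ∈ Icc a b, 0 ≤ β t)
    {χ : EuclideanSpace ℝ (Fin d) → ℝ} (hχ : Test χ) (hχ0 : ∀ x, 0 ≤ χ x) {M : ℝ}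
    (hWF : ∀ ψ, Test ψ → tsupport ψ ⊆ tsupport χ → (∀ x ∈ tsupport ψ, ∃ t ∈ Icc a b, M < |v t x|) →
      WF a b u v ψ)
    {a' : ℝ} (ha' : a' ∈ Ico a b) {k : ℝ} (hk0 : 0 ≤ k) (hkM : M < k)
    (hk : ∀ x ∈ tsupport χ, ∀ t ∈ Icc a b, β t / 2 * opS (u a') x ≤ k / 2)
    {δ : ℝ} (hδ : 0 < δ) :
    ∀ᶠ t in 𝓝[>] a', ∫ x, χ x * max (u t x - u a' x - (k + 1) * (t - a')) 0 ≤ δ * (t - a') := by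
  have ha'I : a' ∈ Icc a b := Ico_subset_Icc_self ha'
  have hχc := hχ.contDiff.continuous
  obtain ⟨Cχ, hCχ0, hCχ⟩ := exists_abs_le hχc hχ.compact
  obtain ⟨CT, hCT0, hCT⟩ := exists_abs_le (continuous_opT hχ.contDiff)
    (hasCompactSupport_opT hχ.compact)
  obtain ⟨Bβ, hBβ⟩ := (isCompact_Icc (a := a) (b := b)).exists_bound_of_continuousOn
    hS.β_cont.continuousOn
  have hBβ0 : 0 ≤ Bβ := (norm_nonneg _).trans (hBβ a' ha'I)
  have hβB : ∀ t ∈ Icc a b, β t ≤ Bβ := fun t ht => (le_abs_self _).trans (hBβ t ht)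
  set C := Bβ / 2 * (CT + d * Cχ) with hCdef
  have hC0 : 0 ≤ C := by positivity
  -- a right neighbourhood of `a'` on which `u` is `L¹`-close to `u a'`
  have hl1 : ∀ᶠ t in 𝓝[≥] a', C * ∫ x, |u t x - u a' x| < δ := by
    have h1 : 𝓝[≥] a' ≤ 𝓝[Icc a b] a' :=
      nhdsWithin_le_of_mem (mem_of_superset (Ico_mem_nhdsGE ha'.2)
        (fun s hs => ⟨ha'.1.trans hs.1, hs.2.le⟩))
    have h2 := ((hS.l1 a' ha'I).mono_left h1).const_mul C
    rw [mul_zero] at h2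
    exact h2.eventually (gt_mem_nhds hδ)
  obtain ⟨e, he, hel⟩ := (mem_nhdsGE_iff_exists_Ico_subset' ha'.2).1 hl1
  have he : a' < e := he
  set h0 := 1 / (Bβ * d + 1) with hh0
  have hh0p : 0 < h0 := by positivity
  filter_upwards [Ioo_mem_nhdsGT (lt_min (lt_min he ha'.2) (show a' < a' + h0 by linarith))]
    with t1 ht1
  have ht1a : a' < t1 := ht1.1
  have ht1e : t1 < e := ht1.2.trans_le ((min_le_left _ _).trans (min_le_left _ _))
  have ht1b : t1 < b := ht1.2.trans_le ((min_le_left _ _).trans (min_le_right _ _))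
  have ht1h : t1 < a' + h0 := ht1.2.trans_le (min_le_right _ _)
  set ε := t1 - a' with hε'
  have hε : 0 < ε := by linarith
  have hsub : Icc a' t1 ⊆ Icc a b := Icc_subset_Icc ha'.1 ht1b.le
  set w : ℝ → EuclideanSpace ℝ (Fin d) → ℝ := fun t x => u t x - u a' x - k * (t - a') with hw
  have hwC : ∀ t ∈ Icc a b, ContDiff ℝ 2 (w t) := fun t ht =>
    ((hS.contDiff t ht).sub (hS.contDiff a' ha'I)).sub contDiff_const
  have hcc : Continuous (cvx ε) := (contDiff_cvx ε).continuous
  set N : ℝ → ℝ := fun t => ∫ x, χ x * cvx ε (w t x) with hN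
  have hNi : ∀ t ∈ Icc a b, Integrable (fun x => χ x * cvx ε (w t x)) := fun t ht =>
    integrable_mul_test hχc hχ.compact (hcc.comp (hwC t ht).continuous)
  have hw_abs : ∀ t ∈ Icc a' t1, ∀ x, max (w t x) 0 ≤ |u t x - u a' x| := fun t ht x => by
    refine max_le ?_ (abs_nonneg _)
    have : 0 ≤ k * (t - a') := mul_nonneg hk0 (by linarith [ht.1])
    have := le_abs_self (u t x - u a' x)
    simp only [hw]; linarith
  -- the convexity inequality turns the weak form into a bound on a left Dini derivative
  have hdini : ∀ t ∈ Ioc a' t1, ∀ y, δ < y → ∀ᶠ s in 𝓝[<] t, N t - N s ≤ (t - s) * y := by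
    intro t ht y hy
    have htI : t ∈ Icc a b := hsub (Ioc_subset_Icc_self ht)
    set ψ : EuclideanSpace ℝ (Fin d) → ℝ := fun x => χ x * smoothTransition (w t x / ε) with hψ
    have hψC : ContDiff ℝ 2 ψ :=
      hχ.contDiff.mul ((contDiff_st ε (n := 2)).comp (hwC t htI))
    have hψT : Test ψ := ⟨hψC, hχ.compact.mul_right⟩
    have hψ0 : ∀ x, 0 ≤ ψ x := fun x => mul_nonneg (hχ0 x) (smoothTransition.nonneg _)
    have hψs : tsupport ψ ⊆ tsupport χ := tsupport_mul_subset_left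
    have hψw : ∀ x ∈ tsupport ψ, 0 ≤ w t x := by
      have hcl : IsClosed {x | 0 ≤ w t x} := isClosed_le continuous_const (hwC t htI).continuous
      refine closure_minimal (fun x hx => ?_) hcl
      by_contra hneg
      have hneg : w t x < 0 := lt_of_not_ge hneg
      apply hx
      simp only [hψ]
      rw [smoothTransition.zero_of_nonpos (div_nonpos_of_nonpos_of_nonneg hneg.le hε.le), mul_zero]
    have hW := hWF ψ hψT hψs (fun x hx => by
      obtain ⟨c, hc, hc'⟩ := exists_hasDerivAt_eq_slope (fun s => u s x) (fun s => v s x) ht.1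
        (fun s _ => (hS.hasDeriv s x).continuousAt.continuousWithinAt)
        (fun s _ => hS.hasDeriv s x)
      refine ⟨c, hsub ⟨hc.1.le, hc.2.le.trans ht.2⟩, lt_of_lt_of_le hkM (le_trans ?_ (le_abs_self _))⟩
      rw [hc', le_div_iff₀ (by linarith [ht.1])]
      have := hψw x hx
      simp only [hw] at this
      linarith) t htI
    have iψ : ∀ g : EuclideanSpace ℝ (Fin d) → ℝ, Continuous g → Integrable (fun x => ψ x * g x) :=
      fun g hg => integrable_mul_test hψC.continuous hψT.compact hg
    have iχ : ∀ g : EuclideanSpace ℝ (Fin d) → ℝ, Continuous g → Integrable (fun x => χ x * g x) :=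
      fun g hg => integrable_mul_test hχc hχ.compact hg
    have i1 : Integrable ψ := hψC.continuous.integrable_of_hasCompactSupport hψT.compact
    -- the derivative at `t` is bounded by `δ`
    have hle : (∫ x, ψ x * v t x) - k * ∫ x, ψ x ≤ δ := by
      have hwc := (hwC t htI).continuous
      have hstc : Continuous (fun r : ℝ => smoothTransition (r / ε)) :=
        (contDiff_st ε (n := 0)).continuous
      have hdstc : Continuous (deriv (fun r : ℝ => smoothTransition (r / ε))) :=
        (contDiff_st ε (n := 1)).continuous_deriv (by norm_num)
      have hΦC : ContDiff ℝ 2 (fun x => cvx ε (w t x)) := (contDiff_cvx ε).comp (hwC t htI)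
      have hβt := hβ0 t htI
      have hpt : ∀ x, ψ x * v t x - k * ψ x ≤ β t / 2 * (χ x * opS (fun y => cvx ε (w t y)) x
          + χ x * (d * max (w t x) 0)) := by
        intro x
        by_cases hx : x ∈ tsupport χ
        · have e1 : opS (u t) x = opS (w t) x + opS (u a') x + d * (k * (t - a')) := by
            have := opS_sub (hS.contDiff t htI) (hS.contDiff a' ha'I) (k * (t - a')) x
            simp only [hw]; linarith
          have e2 := opS_comp (hwC t htI) (hasDerivAt_cvx ε) (hasDerivAt_st ε) x
          have b1 := cvx_nonneg hε (w t x)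
          have b2 := mul_st_le hε (w t x)
          have b3 : 0 ≤ deriv (fun r : ℝ => smoothTransition (r / ε)) (w t x)
              * ∑ i, pd i (w t) x ^ 2 :=
            mul_nonneg (deriv_st_nonneg hε _) (Finset.sum_nonneg fun i _ => sq_nonneg _)
          have b4 : smoothTransition (w t x / ε) * opS (w t) x
              ≤ opS (fun y => cvx ε (w t y)) x + d * max (w t x) 0 := by
            have : (d : ℝ) * (w t x * smoothTransition (w t x / ε) - cvx ε (w t x))
              ≤ d * max (w t x) 0 := by gcongr; linarith
            linarith
          have b5 : β t / 2 * (opS (u a') x + d * (k * (t - a'))) ≤ k := by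
            have c1 := hk x hx t htI
            have c2 : Bβ * d * (t - a') ≤ 1 := by
              have : t - a' ≤ h0 := by linarith [ht.2]
              calc Bβ * d * (t - a') ≤ Bβ * d * h0 := by gcongr
                _ ≤ 1 := by
                  rw [hh0, mul_one_div, div_le_one (by positivity)]; linarith
            have c3 : β t * d * (t - a') ≤ 1 := by
              refine le_trans ?_ c2
              have : 0 ≤ t - a' := by linarith [ht.1]
              gcongr
              exact hβB t htI
            nlinarith
          have b6 : ψ x * v t x - k * ψ x = χ x * (β t / 2 * (smoothTransition (w t x / ε)
              * opS (w t) x)) + ψ x * (β t / 2 * (opS (u a') x + d * (k * (t - a'))) - k) := by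
            rw [hS.pde t htI, e1]; simp only [hψ]; ring
          rw [b6]
          have b7 : ψ x * (β t / 2 * (opS (u a') x + d * (k * (t - a'))) - k) ≤ 0 :=
            mul_nonpos_of_nonneg_of_nonpos (hψ0 x) (by linarith)
          have b8 := mul_le_mul_of_nonneg_left
            (mul_le_mul_of_nonneg_left b4 (by positivity : 0 ≤ β t / 2)) (hχ0 x)
          linarith
        · have : χ x = 0 := image_eq_zero_of_notMem_tsupport hx
          simp [hψ, this]
      have j1 : Integrable (fun x => χ x * opS (fun y => cvx ε (w t y)) x) :=
        iχ _ (continuous_opS hΦC)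
      have j2 : Integrable (fun x => χ x * (d * max (w t x) 0)) :=
        iχ _ (continuous_const.mul (hwc.max continuous_const))
      have e3 : (∫ x, ψ x * v t x) - k * ∫ x, ψ x = ∫ x, (ψ x * v t x - k * ψ x) := by
        rw [← integral_const_mul, integral_sub (iψ _ (hS.continuous_v htI)) (i1.const_mul k)]
      have e4 := integral_mono ((iψ _ (hS.continuous_v htI)).sub (i1.const_mul k))
        ((j1.add j2).const_mul (β t / 2)) hpt
      have iu : Integrable (fun x => u t x - u a' x) := (hS.int t htI).sub (hS.int a' ha'I)
      have htI' : t ∈ Icc a' t1 := Ioc_subset_Icc_self ht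
      have e5 : ∫ x, β t / 2 * (χ x * opS (fun y => cvx ε (w t y)) x
          + χ x * (d * max (w t x) 0)) ≤ C * ∫ x, |u t x - u a' x| := by
        rw [integral_const_mul, integral_add j1 j2, integral_mul_opS hχ.contDiff hχ.compact hΦC]
        have f1 : ∫ x, cvx ε (w t x) * opT χ x ≤ CT * ∫ x, |u t x - u a' x| := by
          refine (le_abs_self _).trans (abs_integral_le_of_abs_le iu fun x => ?_)
          rw [abs_mul, abs_of_nonneg (cvx_nonneg hε _), mul_comm]
          exact mul_le_mul (hCT x) (((cvx_le_mul hε _).trans (mul_st_le hε _)).trans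
            (hw_abs t htI' x)) (cvx_nonneg hε _) hCT0
        have f2 : ∫ x, χ x * (d * max (w t x) 0) ≤ (d * Cχ) * ∫ x, |u t x - u a' x| := by
          refine (le_abs_self _).trans (abs_integral_le_of_abs_le iu fun x => ?_)
          have g0 : 0 ≤ max (w t x) 0 := le_max_right _ _
          rw [abs_mul, abs_of_nonneg (by positivity : 0 ≤ d * max (w t x) 0)]
          calc |χ x| * (d * max (w t x) 0) ≤ Cχ * (d * |u t x - u a' x|) := by
                gcongr
                · exact hCχ x
                · exact hw_abs t htI' x
            _ = _ := by ring
        have g1 : 0 ≤ ∫ x, |u t x - u a' x| := integral_nonneg fun x => abs_nonneg _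
        calc _ ≤ β t / 2 * ((CT + d * Cχ) * ∫ x, |u t x - u a' x|) := by
              gcongr; linarith
          _ ≤ Bβ / 2 * ((CT + d * Cχ) * ∫ x, |u t x - u a' x|) := by
              gcongr; exact hβB t htI
          _ = _ := by rw [hCdef]; ring
      have e6 : C * ∫ x, |u t x - u a' x| < δ := hel ⟨htI'.1, htI'.2.trans_lt ht1e⟩
      rw [e3]
      exact (e4.trans e5).trans e6.le
    have hP : HasDerivWithinAt (fun s => (∫ x, ψ x * u s x) - k * (∫ x, ψ x) * s)
        ((∫ x, ψ x * v t x) - k * ∫ x, ψ x) (Icc a b) t := by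
      have h2 : HasDerivWithinAt (fun s : ℝ => k * (∫ x, ψ x) * s) (k * (∫ x, ψ x)) (Icc a b) t := by
        simpa using (hasDerivWithinAt_id t (Icc a b)).const_mul (k * (∫ x, ψ x))
      exact hW.sub h2
    have h1 : HasDerivWithinAt _ _ (Iio t) t := hP.mono_of_mem_nhdsWithin
      (mem_of_superset (Ioo_mem_nhdsLT (ha'.1.trans_lt ht.1))
        (fun s hs => ⟨hs.1.le, hs.2.le.trans htI.2⟩))
    have h2 := (hasDerivWithinAt_iff_tendsto_slope' (by simp)).1 h1
    filter_upwards [h2.eventually (gt_mem_nhds (hle.trans_lt hy)), self_mem_nhdsWithin,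
      Ioo_mem_nhdsLT (ha'.1.trans_lt ht.1)] with s hs hst hs'
    have hst : s < t := hst
    have hsI : s ∈ Icc a b := ⟨hs'.1.le, hs'.2.le.trans htI.2⟩
    rw [slope_def_field, div_lt_iff_of_neg (by linarith)] at hs
    have hcv : N t - N s ≤ ∫ x, (ψ x * u t x - ψ x * u s x - k * (t - s) * ψ x) := by
      rw [hN]
      simp only
      rw [← integral_sub (hNi t htI) (hNi s hsI)]
      refine integral_mono ((hNi t htI).sub (hNi s hsI))
        (((iψ _ (hS.contDiff t htI).continuous).sub (iψ _ (hS.contDiff s hsI).continuous)).sub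
          (i1.const_mul _)) fun x => ?_
      have := mul_le_mul_of_nonneg_left (cvx_tangent hε (w t x) (w s x)) (hχ0 x)
      have e : w s x - w t x = u s x - u t x + k * (t - s) := by simp only [hw]; ring
      rw [e] at this
      simp only [hψ]
      linarith
    have hcv2 : ∫ x, (ψ x * u t x - ψ x * u s x - k * (t - s) * ψ x)
        = (∫ x, ψ x * u t x) - (∫ x, ψ x * u s x) - k * (t - s) * ∫ x, ψ x := by
      rw [integral_sub (f := fun x => ψ x * u t x - ψ x * u s x)
        ((iψ _ (hS.contDiff t htI).continuous).sub (iψ _ (hS.contDiff s hsI).continuous))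
        (i1.const_mul _), integral_sub (iψ _ (hS.contDiff t htI).continuous)
        (iψ _ (hS.contDiff s hsI).continuous), integral_const_mul]
    rw [hcv2] at hcv
    nlinarith
  have hNcont : ContinuousOn N (Icc a' t1) := by
    intro t ht
    have htI := hsub ht
    refine tendsto_iff_norm_sub_tendsto_zero.2 ?_
    have h1 := ((hS.l1 t htI).mono_left (nhdsWithin_mono t hsub)).const_mul Cχ
    have h2 : Tendsto (fun s => (∫ x, χ x) * (k * |s - t|)) (𝓝[Icc a' t1] t)
        (𝓝 ((∫ x, χ x) * (k * |t - t|))) :=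
      (Continuous.tendsto (by fun_prop) t).mono_left nhdsWithin_le_nhds
    have h3 := h1.add h2
    rw [sub_self, abs_zero, mul_zero, mul_zero, mul_zero, add_zero] at h3
    refine tendsto_of_tendsto_of_tendsto_of_le_of_le' tendsto_const_nhds h3
      (Eventually.of_forall fun s => norm_nonneg _) ?_
    filter_upwards [self_mem_nhdsWithin] with s hs
    have hsI := hsub hs
    have iu : Integrable (fun x => |u s x - u t x|) := ((hS.int s hsI).sub (hS.int t htI)).abs
    have i1 : Integrable χ := hχc.integrable_of_hasCompactSupport hχ.compact
    rw [hN]; simp only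
    rw [← integral_sub (hNi s hsI) (hNi t htI), ← integral_mul_const, ← integral_const_mul,
      ← integral_add (iu.const_mul Cχ) (i1.mul_const _)]
    refine (norm_integral_le_integral_norm _).trans (integral_mono
      ((hNi s hsI).sub (hNi t htI)).norm ((iu.const_mul Cχ).add (i1.mul_const _)) fun x => ?_)
    simp only [Real.norm_eq_abs]
    rw [← mul_sub, abs_mul, abs_of_nonneg (hχ0 x)]
    have g1 : |cvx ε (w s x) - cvx ε (w t x)| ≤ |u s x - u t x| + k * |s - t| := by
      refine (abs_cvx_sub_le hε _ _).trans ?_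
      have : w s x - w t x = (u s x - u t x) + -(k * (s - t)) := by simp only [hw]; ring
      rw [this]
      refine (abs_add_le _ _).trans ?_
      rw [abs_neg, abs_mul k, abs_of_nonneg hk0]
    have g2 : χ x ≤ Cχ := (le_abs_self _).trans (hCχ x)
    calc χ x * |cvx ε (w s x) - cvx ε (w t x)| ≤ χ x * (|u s x - u t x| + k * |s - t|) :=
          mul_le_mul_of_nonneg_left g1 (hχ0 x)
      _ ≤ Cχ * |u s x - u t x| + χ x * (k * |s - t|) := by
          rw [mul_add]; gcongr
  have hfin := sub_le_integral_of_dini_left (φ := fun _ => δ) ht1a.le hNcont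
    (by simp) hdini
  rw [intervalIntegral.integral_const, smul_eq_mul] at hfin
  have hNa : N a' = 0 := by simp [hN, hw, cvx_zero]
  have hlow : ∫ x, χ x * max (u t1 x - u a' x - (k + 1) * ε) 0 ≤ N t1 := by
    have ht1I : t1 ∈ Icc a b := hsub ⟨ht1a.le, le_rfl⟩
    refine integral_mono (integrable_mul_test hχc hχ.compact ?_) (hNi t1 ht1I) fun x => ?_
    · have c1 := (hS.contDiff t1 ht1I).continuous
      have c2 := (hS.contDiff a' ha'I).continuous
      fun_prop
    · refine mul_le_mul_of_nonneg_left ?_ (hχ0 x)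
      have := le_cvx hε (w t1 x)
      refine le_trans (le_of_eq ?_) this
      congr 1; simp only [hw, hε']; ring
  rw [hNa, sub_zero] at hfin
  linarith

end

/-! ### The weak form holds against every test function -/

section
variable {a b : ℝ} {β : ℝ → ℝ} {u v : ℝ → EuclideanSpace ℝ (Fin d) → ℝ}

lemma WF.neg {φ : EuclideanSpace ℝ (Fin d) → ℝ} (h : WF a b u v φ) :
    WF a b (fun t x => - u t x) (fun t x => - v t x) φ := by
  intro t ht
  simpa only [mul_neg, integral_neg] using (h t ht).fun_neg

/-- Inside an open set `O`, it suffices to know the weak form away from `|v| ≤ M`: the comparison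
`Sol.kato`, applied to `u` and `-u`, makes the difference quotients uniformly integrable. -/
lemma Sol.WF_local (hS : Sol a b β u v) (hab : a ≤ b) (hβ0 : ∀ t ∈ Icc a b, 0 ≤ β t)
    {O : Set (EuclideanSpace ℝ (Fin d))} (hO : IsOpen O) {M : ℝ}
    (hWF : ∀ ψ, Test ψ → tsupport ψ ⊆ O → (∀ x ∈ tsupport ψ, ∃ t ∈ Icc a b, M < |v t x|) →
      WF a b u v ψ)
    {φ : EuclideanSpace ℝ (Fin d) → ℝ} (hφ : Test φ) (hφO : tsupport φ ⊆ O) :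
    WF a b u v φ := by
  obtain ⟨χ, hχ, hχO, hχ1, hχ0⟩ := exists_cutoff hφ.compact hO hφO
  refine hS.WF_of_right hab hφ fun a' ha' => ?_
  have ha'I : a' ∈ Icc a b := Ico_subset_Icc_self ha'
  have hφc := hφ.contDiff.continuous
  have hχc := hχ.contDiff.continuous
  obtain ⟨Cφ, hCφ0, hCφ⟩ := exists_abs_le hφc hφ.compact
  obtain ⟨Bβ, hBβ⟩ := (isCompact_Icc (a := a) (b := b)).exists_bound_of_continuousOn
    hS.β_cont.continuousOn
  have hBβ0 : 0 ≤ Bβ := (norm_nonneg _).trans (hBβ a' ha'I)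
  obtain ⟨Ko, hKo⟩ := hχ.compact.exists_bound_of_continuousOn
    (continuous_opS (hS.contDiff a' ha'I)).continuousOn
  obtain ⟨Vb, hVb⟩ := hφ.compact.exists_bound_of_continuousOn
    (hS.continuous_v ha'I).continuousOn
  set k := max (|M| + 1) (Bβ * Ko) with hkdef
  have hk0 : 0 ≤ k := le_trans (by positivity) (le_max_left _ _)
  have hkM : M < k := lt_of_lt_of_le (by linarith [le_abs_self M]) (le_max_left _ _)
  have hkabs : ∀ x ∈ tsupport χ, ∀ t ∈ Icc a b, |β t / 2 * opS (u a') x| ≤ k / 2 := by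
    intro x hx t ht
    have h1 : |β t| ≤ Bβ := hBβ t ht
    have h2 : |opS (u a') x| ≤ Ko := hKo x hx
    have h3 : |β t| * |opS (u a') x| ≤ Bβ * Ko := mul_le_mul h1 h2 (abs_nonneg _) hBβ0
    rw [abs_mul, abs_div, abs_two]
    have := le_max_right (|M| + 1) (Bβ * Ko)
    rw [← hkdef] at this
    linarith
  have tend : ∀ {u' v' : ℝ → EuclideanSpace ℝ (Fin d) → ℝ}, Sol a b β u' v' →
      (∀ ψ, Test ψ → tsupport ψ ⊆ O → (∀ x ∈ tsupport ψ, ∃ t ∈ Icc a b, M < |v' t x|) →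
        WF a b u' v' ψ) →
      (∀ x ∈ tsupport χ, ∀ t ∈ Icc a b, β t / 2 * opS (u' a') x ≤ k / 2) →
      Tendsto (fun t => (∫ x, χ x * max (u' t x - u' a' x - (k + 1) * (t - a')) 0) / (t - a'))
        (𝓝[>] a') (𝓝 0) := by
    intro u' v' hS' hW' hk'
    refine tendsto_order.2 ⟨fun y hy => ?_, fun y hy => ?_⟩
    · filter_upwards [self_mem_nhdsWithin] with t ht
      have ht : a' < t := ht
      exact hy.trans_le (div_nonneg (integral_nonneg fun x =>
        mul_nonneg (hχ0 x) (le_max_right _ _)) (by linarith))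
    · filter_upwards [self_mem_nhdsWithin, hS'.kato hβ0 hχ hχ0 (fun ψ h1 h2 => hW' ψ h1
        (h2.trans hχO)) ha' hk0 hkM hk' (half_pos hy)] with t ht ht2
      have ht : a' < t := ht
      rw [div_lt_iff₀ (by linarith)]
      nlinarith
  have t1 := tend hS hWF (fun x hx t ht => (le_abs_self _).trans (hkabs x hx t ht))
  have t2 := tend hS.neg (fun ψ h1 h2 h3 => (hWF ψ h1 h2 (by simpa using h3)).neg)
    (fun x hx t ht => by
      rw [opS_neg, mul_neg]; exact (neg_le_abs _).trans (hkabs x hx t ht))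
  set A := k + 1 + |Vb| with hA
  have hA0 : 0 ≤ A := by positivity
  set f : ℝ → EuclideanSpace ℝ (Fin d) → ℝ := fun t x => (u t x - u a' x) / (t - a') - v a' x
    with hf
  have hev : ∀ᶠ t in 𝓝[>] a', a' < t ∧ t ∈ Icc a b := by
    filter_upwards [Ioo_mem_nhdsGT ha'.2] with t ht using ⟨ht.1, ha'.1.trans ht.1.le, ht.2.le⟩
  have hfc : ∀ t ∈ Icc a b, Continuous (f t) := fun t ht =>
    (((hS.contDiff t ht).continuous.sub (hS.contDiff a' ha'I).continuous).div_const _).sub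
      (hS.continuous_v ha'I)
  have t3 : Tendsto (fun t => ∫ x, |φ x| * min |f t x| A) (𝓝[>] a') (𝓝 (∫ x, |φ x| * 0)) := by
    refine tendsto_integral_filter_of_dominated_convergence (fun x => |φ x| * A) ?_ ?_ ?_ ?_
    · filter_upwards [hev] with t ht
      exact (hφc.abs.mul ((hfc t ht.2).abs.min continuous_const)).aestronglyMeasurable
    · refine Eventually.of_forall fun t => Eventually.of_forall fun x => ?_
      rw [norm_mul, Real.norm_eq_abs, abs_abs, Real.norm_of_nonneg (le_min (abs_nonneg _) hA0)]
      exact mul_le_mul_of_nonneg_left (min_le_right _ _) (abs_nonneg _)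
    · exact ((hφc.integrable_of_hasCompactSupport hφ.compact).abs).mul_const A
    · refine Eventually.of_forall fun x => ?_
      have h1 := (hasDerivWithinAt_iff_tendsto_slope' (by simp)).1
        ((hS.hasDeriv a' x).hasDerivWithinAt (s := Ioi a'))
      have h2 : Tendsto (fun t => f t x) (𝓝[>] a') (𝓝 0) := by
        have := h1.sub (tendsto_const_nhds (x := v a' x))
        rw [sub_self] at this
        refine this.congr fun t => ?_
        rw [slope_def_field]
      have h3 : Tendsto (fun t => |φ x| * min |f t x| A) (𝓝[>] a') (𝓝 (|φ x| * min |0| A)) :=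
        (h2.abs.min tendsto_const_nhds).const_mul _
      rwa [abs_zero, min_eq_left hA0] at h3
  simp only [mul_zero, integral_zero] at t3
  have t4 := t3.add ((t1.add t2).const_mul Cφ)
  rw [add_zero, mul_zero, add_zero] at t4
  rw [hasDerivWithinAt_iff_tendsto_slope' (by simp)]
  refine tendsto_iff_norm_sub_tendsto_zero.2 ?_
  refine tendsto_of_tendsto_of_tendsto_of_le_of_le' tendsto_const_nhds t4
    (Eventually.of_forall fun s => norm_nonneg _) ?_
  filter_upwards [hev] with t ht
  have htI := ht.2
  have hpos : 0 < t - a' := by linarith [ht.1]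
  have ct := (hS.contDiff t htI).continuous
  have ca := (hS.contDiff a' ha'I).continuous
  have cv := hS.continuous_v ha'I
  have e1 : slope (fun s => ∫ x, φ x * u s x) a' t - ∫ x, φ x * v a' x = ∫ x, φ x * f t x := by
    rw [slope_def_field, ← integral_sub (integrable_mul_test hφc hφ.compact ct)
      (integrable_mul_test hφc hφ.compact ca), ← integral_div, ← integral_sub
      (f := fun x => (φ x * u t x - φ x * u a' x) / (t - a')) _
      (integrable_mul_test hφc hφ.compact cv)]
    · congr 1; ext x; simp only [hf]; ring
    · exact ((integrable_mul_test hφc hφ.compact ct).sub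
        (integrable_mul_test hφc hφ.compact ca)).div_const _
  have i1 : Integrable (fun x => |φ x| * min |f t x| A) :=
    integrable_mul_test hφc.abs hφ.compact.norm ((hfc t htI).abs.min continuous_const)
  have i2 : Integrable (fun x => χ x * max (u t x - u a' x - (k + 1) * (t - a')) 0) :=
    integrable_mul_test hχc hχ.compact (by fun_prop)
  have i3 : Integrable (fun x => χ x * max (- u t x - - u a' x - (k + 1) * (t - a')) 0) :=
    integrable_mul_test hχc hχ.compact (by fun_prop)
  have i4 : Integrable (fun x => Cφ * (χ x * max (u t x - u a' x - (k + 1) * (t - a')) 0 / (t - a')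
      + χ x * max (- u t x - - u a' x - (k + 1) * (t - a')) 0 / (t - a'))) :=
    ((i2.div_const _).add (i3.div_const _)).const_mul _
  rw [e1, ← integral_div, ← integral_div, ← integral_add (i2.div_const _) (i3.div_const _),
    ← integral_const_mul, ← integral_add i1 i4]
  refine (norm_integral_le_integral_norm _).trans (integral_mono
    (integrable_mul_test hφc hφ.compact (hfc t htI)).norm
    (i1.add i4) fun x => ?_)
  simp only [Real.norm_eq_abs, abs_mul]
  set P := max (u t x - u a' x - (k + 1) * (t - a')) 0 with hP
  set Q := max (- u t x - - u a' x - (k + 1) * (t - a')) 0 with hQ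
  have hP0 : 0 ≤ P := le_max_right _ _
  have hQ0 : 0 ≤ Q := le_max_right _ _
  by_cases hx : x ∈ tsupport φ
  · have g1 : |v a' x| ≤ |Vb| := (hVb x hx).trans (le_abs_self _)
    have g2 : |f t x| ≤ min |f t x| A + (P / (t - a') + Q / (t - a')) := by
      have gP : (u t x - u a' x) / (t - a') ≤ P / (t - a') + (k + 1) := by
        rw [← sub_le_iff_le_add, ← mul_div_cancel_right₀ (k + 1) hpos.ne', ← sub_div]
        exact div_le_div_of_nonneg_right (le_max_left _ _) hpos.le
      have gQ : - ((u t x - u a' x) / (t - a')) ≤ Q / (t - a') + (k + 1) := by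
        rw [← sub_le_iff_le_add, ← mul_div_cancel_right₀ (k + 1) hpos.ne', ← neg_div, ← sub_div]
        refine div_le_div_of_nonneg_right (le_trans (le_of_eq ?_) (le_max_left _ _)) hpos.le
        ring
      have gP0 : 0 ≤ P / (t - a') := div_nonneg hP0 hpos.le
      have gQ0 : 0 ≤ Q / (t - a') := div_nonneg hQ0 hpos.le
      rcases le_total |f t x| A with h | h
      · rw [min_eq_left h]; linarith
      · rw [min_eq_right h]
        have g3 := abs_le.1 g1
        rw [abs_le]
        simp only [hf, hA]
        constructor <;> linarith [g3.1, g3.2]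
    have g4 : |φ x| * (P / (t - a') + Q / (t - a')) ≤
        Cφ * (χ x * P / (t - a') + χ x * Q / (t - a')) := by
      rw [hχ1 x hx, one_mul, one_mul]
      have : 0 ≤ P / (t - a') + Q / (t - a') := by positivity
      exact mul_le_mul_of_nonneg_right (hCφ x) this
    calc |φ x| * |f t x| ≤ |φ x| * (min |f t x| A + (P / (t - a') + Q / (t - a'))) :=
          mul_le_mul_of_nonneg_left g2 (abs_nonneg _)
      _ ≤ _ := by rw [mul_add]; linarith
  · have h0 : φ x = 0 := image_eq_zero_of_notMem_tsupport hx
    rw [h0, abs_zero, zero_mul, zero_mul, zero_add]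
    have := hχ0 x
    positivity

/-- Patching by a partition of unity. -/
lemma Sol.WF_of_locally (hS : Sol a b β u v) {φ : EuclideanSpace ℝ (Fin d) → ℝ} (hφ : Test φ)
    (h : ∀ x ∈ tsupport φ, ∃ V ∈ 𝓝 x, ∀ ψ, Test ψ → tsupport ψ ⊆ V → WF a b u v ψ) :
    WF a b u v φ := by
  choose! V hV hVW using h
  obtain ⟨s, hsK, hs⟩ := hφ.compact.elim_nhds_subcover (fun x => interior (V x))
    (fun x hx => interior_mem_nhds.2 (hV x hx))
  obtain ⟨f, hf⟩ := SmoothPartitionOfUnity.exists_isSubordinate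
    (modelWithCornersSelf ℝ (EuclideanSpace ℝ (Fin d))) (isClosed_tsupport φ)
    (fun i : s => interior (V i)) (fun i => isOpen_interior)
    (fun x hx => by
      obtain ⟨i, hi, hxi⟩ := mem_iUnion₂.1 (hs hx)
      exact mem_iUnion.2 ⟨⟨i, hi⟩, hxi⟩)
  have hT : ∀ i : s, Test (fun x => f i x * φ x) := fun i =>
    ⟨(((f i).contMDiff.contDiff).of_le (WithTop.coe_le_coe.2 le_top)).mul hφ.contDiff,
      hφ.compact.mul_left⟩
  have hW : ∀ i : s, WF a b u v (fun x => f i x * φ x) := fun i =>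
    hVW i (hsK i i.2) _ (hT i) ((tsupport_mul_subset_left).trans ((hf i).trans interior_subset))
  have hsum : ∀ x, φ x = ∑ i : s, f i x * φ x := by
    intro x
    by_cases hx : x ∈ tsupport φ
    · have := f.sum_eq_one hx
      rw [finsum_eq_sum_of_fintype] at this
      rw [← Finset.sum_mul, this, one_mul]
    · simp [image_eq_zero_of_notMem_tsupport hx]
  have hint : ∀ g : EuclideanSpace ℝ (Fin d) → ℝ, Continuous g →
      ∫ x, φ x * g x = ∑ i : s, ∫ x, (f i x * φ x) * g x := by
    intro g hg
    rw [← integral_finsetSum]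
    · congr 1; ext x; rw [← Finset.sum_mul, ← hsum]
    · exact fun i _ => integrable_mul_test (hT i).contDiff.continuous (hT i).compact hg
  intro t ht
  rw [hint _ (hS.continuous_v ht)]
  have := HasDerivWithinAt.fun_sum (u := Finset.univ) (fun (i : s) _ => hW i t ht)
  exact this.congr (fun r hr => hint _ (hS.contDiff r hr).continuous)
    (hint _ (hS.contDiff t ht).continuous)

/-- For `β ≥ 0` the weak form holds against all test functions. The points near which it holds
form an open set; were its complement nonempty, Baire's theorem for the closed sets
`{x | ∀ t, |v t x| ≤ n}` would give a point of the complement to which `Sol.WF_local` applies. -/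
lemma Sol.WF_of_nonneg (hS : Sol a b β u v) (hab : a ≤ b) (hβ0 : ∀ t ∈ Icc a b, 0 ≤ β t)
    {φ : EuclideanSpace ℝ (Fin d) → ℝ} (hφ : Test φ) : WF a b u v φ := by
  set G : Set (EuclideanSpace ℝ (Fin d)) :=
    {x | ∃ V ∈ 𝓝 x, ∀ ψ, Test ψ → tsupport ψ ⊆ V → WF a b u v ψ} with hG
  suffices hGu : G = univ from hS.WF_of_locally hφ fun x _ => by
    have : x ∈ G := by rw [hGu]; trivial
    exact this
  have hGo : IsOpen G := by
    rw [isOpen_iff_mem_nhds]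
    rintro x ⟨V, hV, hVW⟩
    filter_upwards [interior_mem_nhds.2 hV] with y hy
    exact ⟨V, mem_interior_iff_mem_nhds.1 hy, hVW⟩
  by_contra hne
  have hSne : (Gᶜ).Nonempty := by rwa [nonempty_compl]
  have hScl : IsClosed Gᶜ := hGo.isClosed_compl
  set X : ℕ → Set (EuclideanSpace ℝ (Fin d)) := fun n => {x | ∀ t ∈ Icc a b, |v t x| ≤ n} with hX
  have hXc : ∀ n, IsClosed (X n) := by
    intro n
    simp only [hX, ofPred_forall]
    exact isClosed_biInter fun t ht => isClosed_le (hS.continuous_v ht).abs continuous_const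
  have hXu : ∀ x, ∃ n, x ∈ X n := by
    intro x
    obtain ⟨C, hC⟩ := (isCompact_Icc (a := a) (b := b)).exists_bound_of_continuousOn
      (hS.v_cont x).continuousOn
    obtain ⟨n, hn⟩ := exists_nat_ge C
    exact ⟨n, fun t ht => (hC t ht).trans hn⟩
  have : CompleteSpace ↥(Gᶜ) := hScl.completeSpace_coe
  have : Nonempty ↥(Gᶜ) := hSne.to_subtype
  obtain ⟨n, z, hz⟩ := nonempty_interior_of_iUnion_of_closed
    (f := fun n => (Subtype.val ⁻¹' X n : Set ↥(Gᶜ)))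
    (fun n => (hXc n).preimage continuous_subtype_val)
    (eq_univ_of_forall fun x => by
      obtain ⟨n, hn⟩ := hXu x
      exact mem_iUnion.2 ⟨n, hn⟩)
  obtain ⟨O, hO, hOe⟩ := isOpen_induced_iff.1
    (isOpen_interior (s := (Subtype.val ⁻¹' X n : Set ↥(Gᶜ))))
  have hzO : (z : EuclideanSpace ℝ (Fin d)) ∈ O := by
    have : z ∈ Subtype.val ⁻¹' O := by rw [hOe]; exact hz
    exact this
  have hOX : ∀ x ∈ O, x ∉ G → x ∈ X n := fun x hx hxG => by
    have h1 : (⟨x, hxG⟩ : ↥(Gᶜ)) ∈ Subtype.val ⁻¹' O := hx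
    rw [hOe] at h1
    exact (interior_subset (s := (Subtype.val ⁻¹' X n : Set ↥(Gᶜ)))) h1
  refine z.2 ⟨O, hO.mem_nhds hzO, fun ψ hψ hψO => ?_⟩
  refine hS.WF_local hab hβ0 hO (M := n) (fun θ hθ hθO hθM => ?_) hψ hψO
  refine hS.WF_of_locally hθ fun x hx => ?_
  have hxG : x ∈ G := by
    by_contra hxG
    obtain ⟨t, ht, htv⟩ := hθM x hx
    exact absurd (hOX x (hθO hx) hxG t ht) (not_le.2 htv)
  exact hxG

lemma Sol.WF_of_nonpos (hS : Sol a b β u v) (hab : a ≤ b) (hβ0 : ∀ t ∈ Icc a b, β t ≤ 0)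
    {φ : EuclideanSpace ℝ (Fin d) → ℝ} (hφ : Test φ) : WF a b u v φ := by
  refine WF.of_reverse (hS.reverse.WF_of_nonneg (by linarith) (fun t ht => ?_) hφ)
  have := hβ0 (-t) ⟨by linarith [ht.2], by linarith [ht.1]⟩
  linarith

end

/-! ### Exhausting cutoffs and the relative entropy density -/

lemma pd_scale {i : Fin d} {f : EuclideanSpace ℝ (Fin d) → ℝ} (hf : Differentiable ℝ f) (c : ℝ)
    (x : EuclideanSpace ℝ (Fin d)) : pd i (fun y => f (c • y)) x = c * pd i f (c • x) := by
  have h := ((hf (c • x)).hasFDerivAt.comp x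
    ((hasFDerivAt_id (𝕜 := ℝ) x).const_smul c)).fderiv
  rw [pd, show (fun y => f (c • y)) = f ∘ fun y => c • y from rfl]
  erw [h]
  simp [pd]

lemma pd_eq_zero_of_const {i : Fin d} {f : EuclideanSpace ℝ (Fin d) → ℝ}
    {U : Set (EuclideanSpace ℝ (Fin d))} (hU : IsOpen U) {c : ℝ} (hf : ∀ x ∈ U, f x = c) :
    ∀ x ∈ U, pd i f x = 0 := by
  intro x hx
  have h : f =ᶠ[𝓝 x] fun _ => c := by
    filter_upwards [hU.mem_nhds hx] with y hy using hf y hy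
  rw [pd, h.fderiv_eq]; simp

/-- Cutoffs exhausting the space, on which `opT` is bounded and tends to zero: rescale a
fixed bump function, using that `x · ∇` is invariant under dilations. -/
lemma exists_cutoff_seq : ∃ (χ : ℕ → EuclideanSpace ℝ (Fin d) → ℝ) (C : ℝ), 0 ≤ C ∧
    (∀ n, Test (χ n)) ∧ (∀ n x, 0 ≤ χ n x) ∧ (∀ n x, |χ n x| ≤ C) ∧ (∀ n x, |opT (χ n) x| ≤ C) ∧
    ∀ x, ∀ᶠ n in atTop, χ n x = 1 ∧ opT (χ n) x = 0 := by
  obtain ⟨f, hf, -, hf1, hf0⟩ := exists_cutoff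
    (isCompact_closedBall (0 : EuclideanSpace ℝ (Fin d)) 1) isOpen_univ (subset_univ _)
  have hd : Differentiable ℝ f := hf.contDiff.differentiable (by norm_num)
  have hd2 : ∀ i, Differentiable ℝ (pd i f) := fun i =>
    (contDiff_pd1 hf.contDiff).differentiable (by norm_num)
  obtain ⟨C1, hC1, hC1'⟩ := exists_abs_le hf.contDiff.continuous hf.compact
  obtain ⟨C2, hC2, hC2'⟩ := exists_abs_le
    (φ := fun y => ∑ i, (|pd i (pd i f) y| + |y i * pd i f y|))
    (continuous_finsetSum _ fun i _ => by
      have h1 := continuous_pd (i := i) (hf.contDiff.of_le (by norm_num))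
      have h2 := continuous_pd (i := i) (contDiff_pd1 (i := i) hf.contDiff)
      fun_prop)
    (HasCompactSupport.intro hf.compact fun x hx => by
      have h1 : ∀ i, pd i f x = 0 := fun i =>
        image_eq_zero_of_notMem_tsupport (fun h => hx (tsupport_pd h))
      have h2 : ∀ i, pd i (pd i f) x = 0 := fun i =>
        image_eq_zero_of_notMem_tsupport (fun h => hx (tsupport_pd (tsupport_pd h)))
      simp [h1, h2])
  set c : ℕ → ℝ := fun n => ((n : ℝ) + 1)⁻¹ with hc
  have hc0 : ∀ n, 0 < c n := fun n => by simp only [hc]; positivity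
  have hc1 : ∀ n, c n ≤ 1 := fun n => by
    simp only [hc]; exact inv_le_one_of_one_le₀ (by linarith [(Nat.cast_nonneg n : (0 : ℝ) ≤ n)])
  have hop : ∀ n x, opT (fun y => f (c n • y)) x
      = ∑ i, (c n ^ 2 * pd i (pd i f) (c n • x) - (c n • x) i * pd i f (c n • x)) := by
    intro n x
    refine Finset.sum_congr rfl fun i _ => ?_
    have e : pd i (fun y => f (c n • y)) = fun x => c n * pd i f (c n • x) :=
      funext fun x => pd_scale hd _ _
    have hD : DifferentiableAt ℝ (fun y => pd i f (c n • y)) x :=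
      ((hd2 i).comp (differentiable_id.const_smul (c n))) x
    rw [e, pd_mul (f := fun _ => c n) (differentiableAt_const _) hD, pd_scale (hd2 i)]
    have e0 : pd i (fun _ : EuclideanSpace ℝ (Fin d) => c n) x = 0 := by simp [pd]
    rw [e0]
    simp only [PiLp.smul_apply, smul_eq_mul]
    ring
  refine ⟨fun n y => f (c n • y), max C1 C2, le_max_of_le_left hC1, fun n => ⟨?_, ?_⟩,
    fun n x => hf0 _, fun n x => (hC1' _).trans (le_max_left _ _), fun n x => ?_, fun x => ?_⟩
  · exact hf.contDiff.comp (contDiff_const_smul (c n))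
  · exact hf.compact.comp_homeomorph (Homeomorph.smulOfNeZero (c n) (hc0 n).ne')
  · rw [hop]
    refine le_trans ?_ (((le_abs_self _).trans (hC2' (c n • x))).trans (le_max_right _ _))
    refine (Finset.abs_sum_le_sum_abs _ _).trans (Finset.sum_le_sum fun i _ => ?_)
    refine (abs_sub _ _).trans (add_le_add ?_ le_rfl)
    rw [abs_mul]
    refine mul_le_of_le_one_left (abs_nonneg _) ?_
    rw [abs_of_nonneg (by positivity)]
    exact pow_le_one₀ (hc0 n).le (hc1 n)
  · obtain ⟨m, hm⟩ := exists_nat_ge ‖x‖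
    filter_upwards [eventually_ge_atTop m] with n hn
    have hn' : (m : ℝ) ≤ n := by exact_mod_cast hn
    have hb : c n • x ∈ Metric.ball (0 : EuclideanSpace ℝ (Fin d)) 1 := by
      rw [mem_ball_zero_iff, norm_smul, Real.norm_of_nonneg (hc0 n).le]
      simp only [hc]
      rw [inv_mul_lt_iff₀ (by positivity)]
      linarith
    have h1 : ∀ y ∈ Metric.ball (0 : EuclideanSpace ℝ (Fin d)) 1, f y = 1 := fun y hy =>
      hf1 y (Metric.ball_subset_closedBall hy)
    have h2 : ∀ i, ∀ y ∈ Metric.ball (0 : EuclideanSpace ℝ (Fin d)) 1, pd i f y = 0 := fun i =>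
      pd_eq_zero_of_const Metric.isOpen_ball h1
    have h3 : ∀ i, ∀ y ∈ Metric.ball (0 : EuclideanSpace ℝ (Fin d)) 1, pd i (pd i f) y = 0 :=
      fun i => pd_eq_zero_of_const Metric.isOpen_ball (h2 i)
    refine ⟨h1 _ hb, ?_⟩
    rw [hop]
    exact Finset.sum_eq_zero fun i _ => by rw [h2 i _ hb, h3 i _ hb]; ring

/-- The nonnegative density `f log (f / g) - f + g` of the relative entropy. -/
noncomputable def eta (f g : EuclideanSpace ℝ (Fin d) → ℝ) (x : EuclideanSpace ℝ (Fin d)) : ℝ :=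
  f x * (log (f x) - log (g x)) - f x + g x

/-- The density `f |∇ log f - ∇ log g|²` of the relative Fisher information. -/
noncomputable def fish (f g : EuclideanSpace ℝ (Fin d) → ℝ) (x : EuclideanSpace ℝ (Fin d)) : ℝ :=
  f x * ‖gradient (fun y => log (f y)) x - gradient (fun y => log (g y)) x‖ ^ 2

/-- The entropy inequality: `η` lies above its tangent planes. -/
lemma eta_ge {α γ l : ℝ} (hα : 0 < α) (hγ : 0 < γ) :
    l * α - (exp l - 1) * γ ≤ α * (log α - log γ) - α + γ := by
  have h1 := add_one_le_exp (l - (log α - log γ))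
  have h2 : exp (l - (log α - log γ)) * α = exp l * γ := by
    rw [exp_sub, exp_sub, exp_log hα, exp_log hγ]; field_simp
  have h3 := mul_le_mul_of_nonneg_right h1 hα.le
  rw [h2] at h3
  linarith

section
variable {f g : EuclideanSpace ℝ (Fin d) → ℝ}

lemma eta_nonneg (hf0 : ∀ x, 0 < f x) (hg0 : ∀ x, 0 < g x) (x) : 0 ≤ eta f g x := by
  have := eta_ge (l := 0) (hf0 x) (hg0 x)
  simpa [eta] using this

lemma fish_nonneg (hf0 : ∀ x, 0 < f x) (x) : 0 ≤ fish f g x :=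
  mul_nonneg (hf0 x).le (sq_nonneg _)

lemma contDiff_ell (hf : ContDiff ℝ 2 f) (hf0 : ∀ x, 0 < f x) (hg : ContDiff ℝ 2 g)
    (hg0 : ∀ x, 0 < g x) : ContDiff ℝ 2 (fun x => log (f x) - log (g x)) :=
  (hf.log fun x => (hf0 x).ne').sub (hg.log fun x => (hg0 x).ne')

lemma contDiff_eta (hf : ContDiff ℝ 2 f) (hf0 : ∀ x, 0 < f x) (hg : ContDiff ℝ 2 g)
    (hg0 : ∀ x, 0 < g x) : ContDiff ℝ 2 (eta f g) :=
  ((hf.mul (contDiff_ell hf hf0 hg hg0)).sub hf).add hg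

lemma pd_log {i : Fin d} (hf : Differentiable ℝ f) (hf0 : ∀ x, 0 < f x) (x) :
    pd i (fun y => log (f y)) x = (f x)⁻¹ * pd i f x :=
  pd_comp (hasDerivAt_log (hf0 x).ne') (hf x)

lemma pd_ell {i : Fin d} (hf : Differentiable ℝ f) (hf0 : ∀ x, 0 < f x) (hg : Differentiable ℝ g)
    (hg0 : ∀ x, 0 < g x) (x) :
    pd i (fun y => log (f y) - log (g y)) x = (f x)⁻¹ * pd i f x - (g x)⁻¹ * pd i g x := by
  rw [pd_sub (f := fun y => log (f y)) (g := fun y => log (g y))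
    ((hf x).log (hf0 x).ne') ((hg x).log (hg0 x).ne'), pd_log hf hf0, pd_log hg hg0]

lemma fish_eq (hf : Differentiable ℝ f) (hf0 : ∀ x, 0 < f x) (hg : Differentiable ℝ g)
    (hg0 : ∀ x, 0 < g x) (x) :
    fish f g x = ∑ i, f x * ((f x)⁻¹ * pd i f x - (g x)⁻¹ * pd i g x) ^ 2 := by
  rw [fish, EuclideanSpace.real_norm_sq_eq, Finset.mul_sum]
  refine Finset.sum_congr rfl fun i _ => ?_
  rw [PiLp.sub_apply, gradient_apply, gradient_apply, pd_log hf hf0, pd_log hg hg0]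

lemma continuous_fish (hf : ContDiff ℝ 2 f) (hf0 : ∀ x, 0 < f x) (hg : ContDiff ℝ 2 g)
    (hg0 : ∀ x, 0 < g x) : Continuous (fish f g) := by
  rw [show fish f g = _ from funext (fish_eq (hf.differentiable (by norm_num)) hf0
    (hg.differentiable (by norm_num)) hg0)]
  refine continuous_finsetSum _ fun i _ => ?_
  have h1 := continuous_pd (i := i) (hf.of_le (by norm_num))
  have h2 := continuous_pd (i := i) (hg.of_le (by norm_num))
  have h3 := hf.continuous.inv₀ (fun x => (hf0 x).ne')
  have h4 := hg.continuous.inv₀ (fun x => (hg0 x).ne')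
  exact hf.continuous.mul (((h3.mul h1).sub (h4.mul h2)).pow 2)

/-- Entropy dissipation, pointwise: `L* η = log (f/g) L* f + (1 - f/g) L* g + f |∇ log (f/g)|²`. -/
lemma opS_eta (hf : ContDiff ℝ 2 f) (hf0 : ∀ x, 0 < f x) (hg : ContDiff ℝ 2 g)
    (hg0 : ∀ x, 0 < g x) (x) :
    opS (eta f g) x = (log (f x) - log (g x)) * opS f x + (1 - f x * (g x)⁻¹) * opS g x
      + fish f g x := by
  have df : Differentiable ℝ f := hf.differentiable (by norm_num)
  have dg : Differentiable ℝ g := hg.differentiable (by norm_num)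
  have dl : Differentiable ℝ (fun x => log (f x) - log (g x)) :=
    (contDiff_ell hf hf0 hg hg0).differentiable (by norm_num)
  have dgi : Differentiable ℝ (fun x => (g x)⁻¹) := dg.inv fun x => (hg0 x).ne'
  have e1 : ∀ i, pd i (eta f g) = fun x => (log (f x) - log (g x)) * pd i f x
      + (1 - f x * (g x)⁻¹) * pd i g x := by
    intro i; ext x
    unfold eta
    rw [pd_add (f := fun x => f x * (log (f x) - log (g x)) - f x) (((df.mul dl).sub df) x) (dg x),
      pd_sub (f := fun x => f x * (log (f x) - log (g x))) ((df.mul dl) x) (df x),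
      pd_mul (df x) (dl x), pd_ell df hf0 dg hg0]
    have := (hf0 x).ne'
    field_simp
    ring
  have e2 : ∀ i, pd i (pd i (eta f g)) x = (log (f x) - log (g x)) * pd i (pd i f) x
      + pd i f x * ((f x)⁻¹ * pd i f x - (g x)⁻¹ * pd i g x)
      + (1 - f x * (g x)⁻¹) * pd i (pd i g) x
      - pd i g x * (f x * (-((g x) ^ 2)⁻¹ * pd i g x) + (g x)⁻¹ * pd i f x) := by
    intro i
    have dfi : Differentiable ℝ (pd i f) := (contDiff_pd1 hf).differentiable (by norm_num)
    have dgi' : Differentiable ℝ (pd i g) := (contDiff_pd1 hg).differentiable (by norm_num)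
    have d3 : Differentiable ℝ (fun x => 1 - f x * (g x)⁻¹) :=
      (differentiable_const 1).sub (df.mul dgi)
    rw [e1, pd_add (f := fun x => (log (f x) - log (g x)) * pd i f x)
      (g := fun x => (1 - f x * (g x)⁻¹) * pd i g x) ((dl.mul dfi) x) ((d3.mul dgi') x),
      pd_mul (dl x) (dfi x), pd_mul (d3 x) (dgi' x), pd_ell df hf0 dg hg0,
      pd_sub (f := fun _ => (1 : ℝ)) (g := fun x => f x * (g x)⁻¹) (differentiableAt_const _)
        ((df.mul dgi) x), pd_mul (df x) (dgi x),
      pd_comp (Φ := fun r : ℝ => r⁻¹) (hasDerivAt_inv (hg0 x).ne') (dg x)]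
    have e0 : pd i (fun _ : EuclideanSpace ℝ (Fin d) => (1 : ℝ)) x = 0 := by simp [pd]
    rw [e0]; ring
  rw [fish_eq df hf0 dg hg0]
  simp only [opS, Finset.mul_sum, ← Finset.sum_add_distrib]
  refine Finset.sum_congr rfl fun i _ => ?_
  rw [e2, e1]
  simp only [eta]
  have h1 := (hf0 x).ne'
  have h2 := (hg0 x).ne'
  field_simp
  ring

end

/-! ### Entropy dissipation on an interval where the weak form holds -/

/-- Two positive solutions on `[a, b]` which satisfy the weak form of the equation, whose relative
entropy is continuous in time and whose entropy dissipation is integrable. -/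
structure Pair (a b : ℝ) (β : ℝ → ℝ) (q p vq vp : ℝ → EuclideanSpace ℝ (Fin d) → ℝ) : Prop where
  solq : Sol a b β q vq
  solp : Sol a b β p vp
  wq : ∀ φ, Test φ → WF a b q vq φ
  wp : ∀ φ, Test φ → WF a b p vp φ
  posq : ∀ t ∈ Icc a b, ∀ x, 0 < q t x
  posp : ∀ t ∈ Icc a b, ∀ x, 0 < p t x
  int_eta : ∀ t ∈ Icc a b, Integrable (eta (q t) (p t))
  l1_eta : ∀ t ∈ Icc a b,
    Tendsto (fun s => ∫ x, |eta (q s) (p s) x - eta (q t) (p t) x|) (𝓝[Icc a b] t) (𝓝 0)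
  cont_eta : ContinuousOn (fun t => ∫ x, eta (q t) (p t) x) (Icc a b)
  int_fish : ∀ t ∈ Icc a b, Integrable (fish (q t) (p t))
  int_β : IntegrableOn (fun t => β t * ∫ x, fish (q t) (p t) x) (Icc a b)

/-- The localized entropy production `∫ χ (log (q/p) ∂ₜq + (1 - q/p) ∂ₜp) dx`. -/
noncomputable def prodn (q p vq vp : ℝ → EuclideanSpace ℝ (Fin d) → ℝ)
    (χ : EuclideanSpace ℝ (Fin d) → ℝ) (t : ℝ) : ℝ :=
  ∫ x, χ x * ((log (q t x) - log (p t x)) * vq t x + (1 - q t x * (p t x)⁻¹) * vp t x)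

section
variable {a b : ℝ} {β : ℝ → ℝ} {q p vq vp : ℝ → EuclideanSpace ℝ (Fin d) → ℝ}
  {χ : EuclideanSpace ℝ (Fin d) → ℝ}

lemma Pair.prodn_eq (h : Pair a b β q p vq vp) (hχ : Test χ) {t : ℝ} (ht : t ∈ Icc a b) :
    prodn q p vq vp χ t = β t / 2 * ((∫ x, eta (q t) (p t) x * opT χ x)
      - ∫ x, χ x * fish (q t) (p t) x) := by
  have cq := h.solq.contDiff t ht
  have cp := h.solp.contDiff t ht
  have pq := h.posq t ht
  have pp := h.posp t ht
  have ce := contDiff_eta cq pq cp pp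
  rw [← integral_mul_opS hχ.contDiff hχ.compact ce, ← integral_sub
    (integrable_mul_test hχ.contDiff.continuous hχ.compact (continuous_opS ce))
    (integrable_mul_test hχ.contDiff.continuous hχ.compact (continuous_fish cq pq cp pp)),
    ← integral_const_mul, prodn]
  congr 1; ext x
  rw [opS_eta cq pq cp pp, h.solq.pde t ht, h.solp.pde t ht]
  ring

lemma Pair.abs_prodn_le (h : Pair a b β q p vq vp) (hχ : Test χ) {C : ℝ}
    (h1 : ∀ x, |χ x| ≤ C) (h2 : ∀ x, |opT χ x| ≤ C) {t : ℝ} (ht : t ∈ Icc a b) :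
    |prodn q p vq vp χ t| ≤ C * |β t * ∫ x, eta (q t) (p t) x|
      + C * |β t * ∫ x, fish (q t) (p t) x| := by
  have pq := h.posq t ht
  have pp := h.posp t ht
  have e1 : |∫ x, eta (q t) (p t) x * opT χ x| ≤ C * ∫ x, eta (q t) (p t) x := by
    have := abs_integral_le_of_abs_le (f := fun x => eta (q t) (p t) x * opT χ x) (C := C)
      (h.int_eta t ht) fun x => by
        rw [abs_mul, mul_comm]; exact mul_le_mul_of_nonneg_right (h2 x) (abs_nonneg _)
    simpa only [abs_of_nonneg (eta_nonneg pq pp _)] using this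
  have e2 : |∫ x, χ x * fish (q t) (p t) x| ≤ C * ∫ x, fish (q t) (p t) x := by
    have := abs_integral_le_of_abs_le (f := fun x => χ x * fish (q t) (p t) x) (C := C)
      (h.int_fish t ht) fun x => by
        rw [abs_mul]; exact mul_le_mul_of_nonneg_right (h1 x) (abs_nonneg _)
    simpa only [abs_of_nonneg (fish_nonneg pq _)] using this
  have n1 : 0 ≤ ∫ x, eta (q t) (p t) x := integral_nonneg (eta_nonneg pq pp)
  have n2 : 0 ≤ ∫ x, fish (q t) (p t) x := integral_nonneg (fish_nonneg pq)
  rw [h.prodn_eq hχ ht, abs_mul, abs_div, abs_two, abs_mul (β t), abs_mul (β t), abs_of_nonneg n1,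
    abs_of_nonneg n2]
  have e3 := (abs_sub _ _).trans (add_le_add e1 e2)
  have e4 : 0 ≤ C * ∫ x, eta (q t) (p t) x := (abs_nonneg _).trans e1
  have e5 : 0 ≤ C * ∫ x, fish (q t) (p t) x := (abs_nonneg _).trans e2
  have e6 := mul_le_mul_of_nonneg_left e3 (show 0 ≤ |β t| / 2 by positivity)
  nlinarith [mul_nonneg (abs_nonneg (β t)) (add_nonneg e4 e5)]

lemma Pair.bound_integrable (h : Pair a b β q p vq vp) (C : ℝ) :
    IntegrableOn (fun t => C * |β t * ∫ x, eta (q t) (p t) x|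
      + C * |β t * ∫ x, fish (q t) (p t) x|) (Icc a b) := by
  refine Integrable.add ?_ (h.int_β.abs.const_mul C)
  exact (((h.solq.β_cont.continuousOn.mul h.cont_eta).abs).integrableOn_Icc).const_mul C

lemma Pair.prodn_aesm (h : Pair a b β q p vq vp) (hab : a ≤ b) (hχ : Test χ) :
    AEStronglyMeasurable (prodn q p vq vp χ) (volume.restrict (Icc a b)) := by
  set τ : ℝ → ℝ := fun t => (projIcc a b hab t : ℝ) with hτ
  have τc : Continuous τ := continuous_subtype_val.comp continuous_projIcc
  have τm : ∀ t, τ t ∈ Icc a b := fun t => (projIcc a b hab t).2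
  -- Time is clamped to `[a, b]`, which makes the integrand continuous in time on the whole line.
  set K : ℝ → EuclideanSpace ℝ (Fin d) → ℝ := fun t x => χ x *
    ((log (q (τ t) x) - log (p (τ t) x)) * vq (τ t) x
      + (1 - q (τ t) x * (p (τ t) x)⁻¹) * vp (τ t) x) with hK
  have K1 : ∀ x, Continuous fun t => K t x := by
    intro x
    have a1 : Continuous fun t => q (τ t) x :=
      (continuous_iff_continuousAt.2 fun t => (h.solq.hasDeriv t x).continuousAt).comp τc
    have a2 : Continuous fun t => p (τ t) x :=
      (continuous_iff_continuousAt.2 fun t => (h.solp.hasDeriv t x).continuousAt).comp τc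
    have a3 := (h.solq.v_cont x).comp τc
    have a4 := (h.solp.v_cont x).comp τc
    have n1 : ∀ t, q (τ t) x ≠ 0 := fun t => (h.posq _ (τm t) x).ne'
    have n2 : ∀ t, p (τ t) x ≠ 0 := fun t => (h.posp _ (τm t) x).ne'
    exact continuous_const.mul ((((a1.log n1).sub (a2.log n2)).mul a3).add
      ((continuous_const.sub (a1.mul (a2.inv₀ n2))).mul a4))
  have K2 : ∀ t, Measurable (K t) := by
    intro t
    have a1 := (h.solq.contDiff _ (τm t)).continuous
    have a2 := (h.solp.contDiff _ (τm t)).continuous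
    have a3 := h.solq.continuous_v (τm t)
    have a4 := h.solp.continuous_v (τm t)
    have n1 : ∀ x, q (τ t) x ≠ 0 := fun x => (h.posq _ (τm t) x).ne'
    have n2 : ∀ x, p (τ t) x ≠ 0 := fun x => (h.posp _ (τm t) x).ne'
    exact (hχ.contDiff.continuous.mul ((((a1.log n1).sub (a2.log n2)).mul a3).add
      ((continuous_const.sub (a1.mul (a2.inv₀ n2))).mul a4))).measurable
  have K3 : Measurable (Function.uncurry K) := measurable_uncurry_of_continuous_of_measurable K1 K2
  have K4 : StronglyMeasurable fun t => ∫ x, K t x :=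
    K3.stronglyMeasurable.integral_prod_right
  refine K4.aestronglyMeasurable.congr ?_
  filter_upwards [ae_restrict_mem measurableSet_Icc] with t ht
  have : τ t = t := by simp [hτ, projIcc_of_mem hab ht]
  simp only [hK, this, prodn]

lemma Pair.prodn_integrable (h : Pair a b β q p vq vp) (hab : a ≤ b) (hχ : Test χ) :
    IntegrableOn (prodn q p vq vp χ) (Icc a b) := by
  obtain ⟨C1, hC1, h1⟩ := exists_abs_le hχ.contDiff.continuous hχ.compact
  obtain ⟨C2, hC2, h2⟩ := exists_abs_le (continuous_opT hχ.contDiff)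
    (hasCompactSupport_opT hχ.compact)
  refine (h.bound_integrable (C1 + C2)).mono' (h.prodn_aesm hab hχ) ?_
  filter_upwards [ae_restrict_mem measurableSet_Icc] with t ht
  exact h.abs_prodn_le hχ (fun x => (h1 x).trans (by linarith)) (fun x => (h2 x).trans (by linarith))
    ht

/-- The localized entropy identity. Freezing the coefficients of the tangent plane of `η` at time
`t` gives a function of `s` which touches `∫ χ η(s)` from below at `s = t` and whose derivative is
known from the weak form. -/
lemma Pair.local_identity (h : Pair a b β q p vq vp) (hab : a ≤ b) (hχ : Test χ)
    (hχ0 : ∀ x, 0 ≤ χ x) :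
    (∫ x, χ x * eta (q b) (p b) x) - (∫ x, χ x * eta (q a) (p a) x)
      = ∫ t in a..b, prodn q p vq vp χ t := by
  have ce : ∀ t ∈ Icc a b, Continuous (eta (q t) (p t)) := fun t ht =>
    (contDiff_eta (h.solq.contDiff t ht) (h.posq t ht) (h.solp.contDiff t ht)
      (h.posp t ht)).continuous
  have hχc := hχ.contDiff.continuous
  have tq : ∀ t ∈ Icc a b, Test fun x => χ x * (log (q t x) - log (p t x)) := fun t ht =>
    ⟨hχ.contDiff.mul (contDiff_ell (h.solq.contDiff t ht) (h.posq t ht) (h.solp.contDiff t ht)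
      (h.posp t ht)), hχ.compact.mul_right⟩
  have tp : ∀ t ∈ Icc a b, Test fun x => χ x * (1 - q t x * (p t x)⁻¹) := fun t ht =>
    ⟨hχ.contDiff.mul (contDiff_const.sub ((h.solq.contDiff t ht).mul
      ((h.solp.contDiff t ht).inv fun x => (h.posp t ht x).ne'))), hχ.compact.mul_right⟩
  refine integral_eq_sub_of_touch (f := fun t => ∫ x, χ x * eta (q t) (p t) x)
    (H := fun t s => (∫ x, χ x * (log (q t x) - log (p t x)) * q s x)
      + ∫ x, χ x * (1 - q t x * (p t x)⁻¹) * p s x) hab ?_ (h.prodn_integrable hab hχ) ?_ ?_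
  · intro t ht
    obtain ⟨C, hC, h1⟩ := exists_abs_le hχc hχ.compact
    have h0 := (h.l1_eta t ht).const_mul C
    rw [mul_zero] at h0
    refine tendsto_iff_dist_tendsto_zero.2 (squeeze_zero' (Eventually.of_forall fun _ => dist_nonneg)
      ?_ h0)
    filter_upwards [self_mem_nhdsWithin] with s hs
    rw [dist_eq, ← integral_sub (integrable_mul_test hχc hχ.compact (ce s hs))
      (integrable_mul_test hχc hχ.compact (ce t ht))]
    refine abs_integral_le_of_abs_le ((h.int_eta s hs).sub (h.int_eta t ht)) fun x => ?_
    rw [← mul_sub, abs_mul]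
    exact mul_le_mul_of_nonneg_right (h1 x) (abs_nonneg _)
  · intro t ht
    have h1 := (h.wq _ (tq t ht) t ht).add (h.wp _ (tp t ht) t ht)
    rw [← integral_add (integrable_mul_test (tq t ht).contDiff.continuous (tq t ht).compact
      (h.solq.continuous_v ht)) (integrable_mul_test (tp t ht).contDiff.continuous (tp t ht).compact
      (h.solp.continuous_v ht))] at h1
    have h2 : prodn q p vq vp χ t = ∫ x, (χ x * (log (q t x) - log (p t x)) * vq t x
        + χ x * (1 - q t x * (p t x)⁻¹) * vp t x) := by
      rw [prodn]; congr 1; ext x; ring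
    rw [h2]
    exact h1
  · intro t ht s hs
    have iq : ∀ r ∈ Icc a b, Integrable fun x => χ x * (log (q t x) - log (p t x)) * q r x :=
      fun r hr => integrable_mul_test (tq t ht).contDiff.continuous (tq t ht).compact
        (h.solq.contDiff r hr).continuous
    have ip : ∀ r ∈ Icc a b, Integrable fun x => χ x * (1 - q t x * (p t x)⁻¹) * p r x :=
      fun r hr => integrable_mul_test (tp t ht).contDiff.continuous (tp t ht).compact
        (h.solp.contDiff r hr).continuous
    have ie := fun r hr => integrable_mul_test hχc hχ.compact (ce r hr)
    have iH := fun r hr => (iq r hr).add (ip r hr)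
    have exq : ∀ x, exp (log (q t x) - log (p t x)) = q t x * (p t x)⁻¹ := fun x => by
      rw [exp_sub, exp_log (h.posq t ht x), exp_log (h.posp t ht x), div_eq_mul_inv]
    have hs' : (∫ x, χ x * (log (q t x) - log (p t x)) * q s x)
        + (∫ x, χ x * (1 - q t x * (p t x)⁻¹) * p s x) ≤ ∫ x, χ x * eta (q s) (p s) x := by
      rw [← integral_add (iq s hs) (ip s hs)]
      refine integral_mono (iH s hs) (ie s hs) fun x => ?_
      have := mul_le_mul_of_nonneg_left (eta_ge (l := log (q t x) - log (p t x))
        (h.posq s hs x) (h.posp s hs x)) (hχ0 x)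
      rw [exq] at this
      simp only [eta]
      linarith
    have ht' : (∫ x, χ x * (log (q t x) - log (p t x)) * q t x)
        + (∫ x, χ x * (1 - q t x * (p t x)⁻¹) * p t x) = ∫ x, χ x * eta (q t) (p t) x := by
      rw [← integral_add (iq t ht) (ip t ht)]
      congr 1; ext x
      have := (h.posp t ht x).ne'
      simp only [eta]
      field_simp
      ring
    simp only [ht']
    linarith

/-- Removing the cutoff from the localized entropy identity. -/
lemma Pair.identity (h : Pair a b β q p vq vp) (hab : a ≤ b) :
    (∫ x, eta (q b) (p b) x) - (∫ x, eta (q a) (p a) x)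
      = - ∫ t in a..b, β t / 2 * ∫ x, fish (q t) (p t) x := by
  obtain ⟨χ, C, hC, hχ, hχ0, hχC, hTC, hlim⟩ := exists_cutoff_seq (d := d)
  have L1 : ∀ g : EuclideanSpace ℝ (Fin d) → ℝ, Integrable g →
      Tendsto (fun n => ∫ x, χ n x * g x) atTop (𝓝 (∫ x, g x)) := by
    intro g hg
    refine tendsto_integral_of_dominated_convergence (fun x => C * |g x|) (fun n => ?_)
      (hg.abs.const_mul C) (fun n => Eventually.of_forall fun x => ?_)
      (Eventually.of_forall fun x => ?_)
    · exact (hχ n).contDiff.continuous.aestronglyMeasurable.mul hg.aestronglyMeasurable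
    · rw [norm_mul]; exact mul_le_mul_of_nonneg_right (hχC n x) (abs_nonneg _)
    · refine tendsto_const_nhds.congr' ?_
      filter_upwards [hlim x] with n hn
      rw [hn.1, one_mul]
  have L2 : ∀ g : EuclideanSpace ℝ (Fin d) → ℝ, Integrable g →
      Tendsto (fun n => ∫ x, g x * opT (χ n) x) atTop (𝓝 0) := by
    intro g hg
    rw [← integral_zero (EuclideanSpace ℝ (Fin d)) ℝ (μ := volume)]
    refine tendsto_integral_of_dominated_convergence (fun x => C * |g x|) (fun n => ?_)
      (hg.abs.const_mul C) (fun n => Eventually.of_forall fun x => ?_)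
      (Eventually.of_forall fun x => ?_)
    · exact hg.aestronglyMeasurable.mul (continuous_opT (hχ n).contDiff).aestronglyMeasurable
    · rw [norm_mul, mul_comm]; exact mul_le_mul_of_nonneg_right (hTC n x) (abs_nonneg _)
    · refine tendsto_const_nhds.congr' ?_
      filter_upwards [hlim x] with n hn
      rw [hn.2, mul_zero]
  have hb : b ∈ Icc a b := right_mem_Icc.2 hab
  have ha : a ∈ Icc a b := left_mem_Icc.2 hab
  have lim1 := (L1 _ (h.int_eta b hb)).sub (L1 _ (h.int_eta a ha))
  have lim2 : Tendsto (fun n => ∫ t in a..b, prodn q p vq vp (χ n) t) atTop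
      (𝓝 (∫ t in a..b, -(β t / 2 * ∫ x, fish (q t) (p t) x))) := by
    simp only [intervalIntegral.integral_of_le hab, ← integral_Icc_eq_integral_Ioc]
    refine tendsto_integral_of_dominated_convergence _ (fun n => h.prodn_aesm hab (hχ n))
      (h.bound_integrable C) (fun n => ?_) ?_
    · filter_upwards [ae_restrict_mem measurableSet_Icc] with t ht
      exact h.abs_prodn_le (hχ n) (hχC n) (hTC n) ht
    · filter_upwards [ae_restrict_mem measurableSet_Icc] with t ht
      have := ((L2 _ (h.int_eta t ht)).sub (L1 _ (h.int_fish t ht))).const_mul (β t / 2)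
      rw [zero_sub, mul_neg] at this
      exact this.congr fun n => (h.prodn_eq (hχ n) ht).symm
  have := tendsto_nhds_unique lim1
    (lim2.congr fun n => (h.local_identity hab (hχ n) (hχ0 n)).symm)
  rw [this, intervalIntegral.integral_neg]

end

/-! ### Application to admissible densities -/

section
variable {T : ℝ} {β : ℝ → ℝ} {q p : ℝ → EuclideanSpace ℝ (Fin d) → ℝ}

lemma integrable_of_admissible (hq : AdmissibleVP d T β q) {t : ℝ} (ht : t ∈ Icc 0 T) :
    Integrable (q t) := by
  by_contra h
  have h1 := hq.mass_one t ht
  rw [integral_undef h] at h1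
  exact zero_ne_one h1

lemma hasDerivAt_of_admissible (hq : AdmissibleVP d T β q) (t : ℝ)
    (x : EuclideanSpace ℝ (Fin d)) :
    HasDerivAt (fun s => q s x) (deriv (fun s => q s x) t) t :=
  ((hq.contDiff_t x).differentiable (by norm_num) t).hasDerivAt

lemma sol_of_admissible (hβ : Continuous β) (hq : AdmissibleVP d T β q) {a b : ℝ} (ha : 0 ≤ a)
    (hb : b ≤ T) : Sol a b β q (fun t x => deriv (fun s => q s x) t) := by
  have sub : Icc a b ⊆ Icc 0 T := Icc_subset_Icc ha hb
  refine ⟨hβ, hasDerivAt_of_admissible hq, fun x => (hq.contDiff_t x).continuous_deriv (by norm_num),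
    fun t ht => hq.contDiff_x t (sub ht), fun t ht => integrable_of_admissible hq (sub ht),
    fun t ht => ?_, fun t ht x => ?_⟩
  · refine scheffe ?_ ?_ (integrable_of_admissible hq (sub ht))
      (fun x => (hq.pos t (sub ht) x).le) (fun x => ?_) ?_
    · filter_upwards [self_mem_nhdsWithin] with s hs
      exact integrable_of_admissible hq (sub hs)
    · filter_upwards [self_mem_nhdsWithin] with s hs x
      exact (hq.pos s (sub hs) x).le
    · exact (hasDerivAt_of_admissible hq t x).continuousAt.continuousWithinAt
    · refine tendsto_const_nhds.congr' ?_
      filter_upwards [self_mem_nhdsWithin] with s hs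
      rw [hq.mass_one s (sub hs), hq.mass_one t (sub ht)]
  · rw [hq.fokkerPlanck t (sub ht) x, diverg_vpField (hq.contDiff_x t (sub ht))]

lemma eta_of_admissible (hq : AdmissibleVP d T β q) (hp : AdmissibleVP d T β p)
    (hreg : VPReg d T q p) {t : ℝ} (ht : t ∈ Icc 0 T) :
    Integrable (eta (q t) (p t)) ∧ ∫ x, eta (q t) (p t) x = KLt q p t := by
  have iq := integrable_of_admissible hq ht
  have ip := integrable_of_admissible hp ht
  have e : eta (q t) (p t) = fun x => q t x * log (q t x / p t x) - q t x + p t x := by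
    ext x
    rw [eta, log_div (hq.pos t ht x).ne' (hp.pos t ht x).ne']
  have cq := (hq.contDiff_x t ht).continuous
  have cp := (hp.contDiff_x t ht).continuous
  have ik : Integrable fun x => q t x * log (q t x / p t x) := by
    refine (hreg.int_kl t ht).mono' ?_ (Eventually.of_forall fun x => ?_)
    · exact (cq.mul ((cq.div cp fun x => (hp.pos t ht x).ne').log fun x =>
        (div_pos (hq.pos t ht x) (hp.pos t ht x)).ne')).aestronglyMeasurable
    · rw [norm_mul, norm_of_nonneg (hq.pos t ht x).le, norm_eq_abs]
  rw [e]
  refine ⟨(ik.sub iq).add ip, ?_⟩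
  have h1 := integral_add (ik.sub iq) ip
  have h2 := integral_sub ik iq
  simp only [Pi.sub_apply] at h1
  rw [h1, h2, hq.mass_one t ht, hp.mass_one t ht, KLt]
  ring

lemma pair_of_admissible (hβ : Continuous β) (hq : AdmissibleVP d T β q)
    (hp : AdmissibleVP d T β p) (hreg : VPReg d T q p)
    (hint : IntegrableOn (fun t => β t * relFisher q p t) (Icc 0 T)) {a b : ℝ} (ha : 0 ≤ a)
    (hab : a ≤ b) (hb : b ≤ T)
    (hs : (∀ t ∈ Icc a b, 0 ≤ β t) ∨ ∀ t ∈ Icc a b, β t ≤ 0) :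
    Pair a b β q p (fun t x => deriv (fun s => q s x) t) (fun t x => deriv (fun s => p s x) t) := by
  have sub : Icc a b ⊆ Icc 0 T := Icc_subset_Icc ha hb
  have sq := sol_of_admissible hβ hq ha hb
  have sp := sol_of_admissible hβ hp ha hb
  have ce : ContinuousOn (fun t => ∫ x, eta (q t) (p t) x) (Icc a b) :=
    ContinuousOn.congr (f := KLt q p)
      (fun t ht => (hreg.kl_hasDeriv t (sub ht)).continuousAt.continuousWithinAt)
      fun t ht => (eta_of_admissible hq hp hreg (sub ht)).2
  refine ⟨sq, sp, fun φ hφ => ?_, fun φ hφ => ?_, fun t ht => hq.pos t (sub ht),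
    fun t ht => hp.pos t (sub ht), fun t ht => (eta_of_admissible hq hp hreg (sub ht)).1,
    fun t ht => ?_, ce, fun t ht => hreg.int_fisher t (sub ht), hint.mono_set sub⟩
  · exact hs.elim (fun h => sq.WF_of_nonneg hab h hφ) fun h => sq.WF_of_nonpos hab h hφ
  · exact hs.elim (fun h => sp.WF_of_nonneg hab h hφ) fun h => sp.WF_of_nonpos hab h hφ
  · refine scheffe ?_ ?_ (eta_of_admissible hq hp hreg (sub ht)).1
      (eta_nonneg (hq.pos t (sub ht)) (hp.pos t (sub ht))) (fun x => ?_) (ce t ht)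
    · filter_upwards [self_mem_nhdsWithin] with s hs
      exact (eta_of_admissible hq hp hreg (sub hs)).1
    · filter_upwards [self_mem_nhdsWithin] with s hs
      exact eta_nonneg (hq.pos s (sub hs)) (hp.pos s (sub hs))
    · have c1 := (hasDerivAt_of_admissible hq t x).continuousAt
      have c2 := (hasDerivAt_of_admissible hp t x).continuousAt
      have : ContinuousAt (fun s => eta (q s) (p s) x) t :=
        ((c1.mul ((c1.log (hq.pos t (sub ht) x).ne').sub
          (c2.log (hp.pos t (sub ht) x).ne'))).sub c1).add c2
      exact this.continuousWithinAt

/-- The Kullback–Leibler identity on intervals where `β` has constant sign. -/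
lemma kl_sub_of_sign (hβ : Continuous β) (hq : AdmissibleVP d T β q)
    (hp : AdmissibleVP d T β p) (hreg : VPReg d T q p)
    (hint : IntegrableOn (fun t => β t * relFisher q p t) (Icc 0 T)) {a b : ℝ} (ha : 0 ≤ a)
    (hab : a ≤ b) (hb : b ≤ T)
    (hs : (∀ t ∈ Icc a b, 0 ≤ β t) ∨ ∀ t ∈ Icc a b, β t ≤ 0) :
    KLt q p b - KLt q p a = - ∫ t in a..b, β t / 2 * relFisher q p t := by
  have h := (pair_of_admissible hβ hq hp hreg hint ha hab hb hs).identity hab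
  rwa [(eta_of_admissible hq hp hreg ⟨ha.trans hab, hb⟩).2,
    (eta_of_admissible hq hp hreg ⟨ha, hab.trans hb⟩).2] at h

/-- Where `β` vanishes the equation freezes both densities to first order, so that the prescribed
derivative of the Kullback–Leibler divergence is zero. -/
lemma deriv_eq_zero_of_beta (hq : AdmissibleVP d T β q) (hp : AdmissibleVP d T β p) {t : ℝ}
    (ht : t ∈ Icc 0 T) (h0 : β t = 0) :
    ∫ x, deriv (fun s => q s x * log (q s x / p s x)) t = 0 := by
  rw [← integral_zero (EuclideanSpace ℝ (Fin d)) ℝ (μ := volume)]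
  congr 1; ext x
  have h1 := hasDerivAt_of_admissible hq t x
  have h2 := hasDerivAt_of_admissible hp t x
  rw [hq.fokkerPlanck t ht, h0, zero_div, zero_mul] at h1
  rw [hp.fokkerPlanck t ht, h0, zero_div, zero_mul] at h2
  have h3 := (h1.fun_mul ((h1.fun_div h2 (hp.pos t ht x).ne').log
    (div_pos (hq.pos t ht x) (hp.pos t ht x)).ne'))
  rw [h3.deriv]
  simp

/-- Near a time with `β ≠ 0` the identity on intervals of constant sign applies, and Lebesgue's
differentiation theorem identifies the derivative of the Kullback–Leibler divergence. -/
lemma ae_deriv_eq (hβ : Continuous β) (hq : AdmissibleVP d T β q)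
    (hp : AdmissibleVP d T β p) (hreg : VPReg d T q p) (hT : 0 < T)
    (hint : IntervalIntegrable (fun t => β t * relFisher q p t) volume 0 T) :
    ∀ᵐ t, t ∈ Ioc 0 T → -(β t / 2 * relFisher q p t)
      = ∫ x, deriv (fun s => q s x * log (q s x / p s x)) t := by
  have hint1 : IntegrableOn (fun t => β t * relFisher q p t) (Icc 0 T) :=
    (intervalIntegrable_iff_integrableOn_Icc_of_le hT.le).1 hint
  have hint2 : IntervalIntegrable (fun t => β t / 2 * relFisher q p t) volume 0 T := by
    refine (hint.const_mul (1 / 2)).congr (fun t _ => ?_)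
    ring
  have hne : ∀ᵐ t : ℝ, t ≠ T := by simp [ae_iff, measure_singleton]
  filter_upwards [hint2.ae_hasDerivAt_integral, hne] with t hd hne ht
  have htI : t ∈ Icc 0 T := Ioc_subset_Icc_self ht
  rcases eq_or_ne (β t) 0 with h0 | h0
  · rw [deriv_eq_zero_of_beta hq hp htI h0, h0]; simp
  have htT : t < T := lt_of_le_of_ne ht.2 hne
  have hsign : ∀ᶠ r in 𝓝 t, r ∈ Ioo 0 T ∧ 0 < β r * β t := by
    have hIoo : ∀ᶠ r in 𝓝 t, r ∈ Ioo 0 T := Ioo_mem_nhds ht.1 htT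
    refine hIoo.and ?_
    have : ContinuousAt (fun r => β r * β t) t := (hβ.mul continuous_const).continuousAt
    exact this.eventually (lt_mem_nhds (mul_self_pos.2 h0))
  obtain ⟨ε, hε, hball⟩ := Metric.eventually_nhds_iff.1 hsign
  have near : ∀ r ∈ Icc (t - ε / 2) (t + ε / 2), r ∈ Ioo 0 T ∧ 0 < β r * β t := fun r hr =>
    hball (by rw [dist_eq, abs_lt]; constructor <;> linarith [hr.1, hr.2])
  have hc := (near (t - ε / 2) ⟨le_rfl, by linarith⟩).1
  have key : ∀ r ∈ Icc (t - ε / 2) (t + ε / 2),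
      KLt q p r = KLt q p (t - ε / 2) - ∫ s in (t - ε / 2)..r, β s / 2 * relFisher q p s := by
    intro r hr
    have hs : (∀ s ∈ Icc (t - ε / 2) r, 0 ≤ β s) ∨ ∀ s ∈ Icc (t - ε / 2) r, β s ≤ 0 := by
      have hn : ∀ s ∈ Icc (t - ε / 2) r, 0 < β s * β t := fun s hs =>
        (near s ⟨hs.1, hs.2.trans hr.2⟩).2
      rcases lt_or_gt_of_ne h0 with hn0 | hp0
      · right; intro s hs; by_contra hcon
        nlinarith [hn s hs]
      · left; intro s hs; by_contra hcon
        nlinarith [hn s hs]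
    have := kl_sub_of_sign hβ hq hp hreg hint1 hc.1.le hr.1 (near r hr).1.2.le hs
    linarith
  have hd1 : HasDerivAt (KLt q p) (-(β t / 2 * relFisher q p t)) t := by
    have h1 := (hd (by rwa [uIcc_of_le hT.le]) (t - ε / 2)
      (by rw [uIcc_of_le hT.le]; exact Ioo_subset_Icc_self hc)).const_sub (KLt q p (t - ε / 2))
    refine h1.congr_of_eventuallyEq ?_
    filter_upwards [Icc_mem_nhds (show t - ε / 2 < t by linarith) (show t < t + ε / 2 by linarith)]
      with r hr using key r hr
  exact hd1.unique (hreg.kl_hasDeriv t htI)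

end

end VPKL

/-- **Score matching over the diffusion trajectory equals a difference of KL divergences.**
For admissible VP densities `q, p` satisfying the regularity assumptions,
`∫₀ᵀ (β(t)/2) I(t) dt = KL(0) − KL(T)`; in particular, if `KL(T) = 0`,
then `KL(0) = ∫₀ᵀ (β(t)/2) I(t) dt`. -/
theorem score_matching_integral_eq_kl_difference
    {d : ℕ} (hd : 1 ≤ d) {T : ℝ} (hT : 0 < T) {β : ℝ → ℝ} (hβ : Continuous β)
    {q p : ℝ → EuclideanSpace ℝ (Fin d) → ℝ}
    (hq : AdmissibleVP d T β q) (hp : AdmissibleVP d T β p)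
    (hreg : VPReg d T q p)
    (hint : IntervalIntegrable (fun t => β t * relFisher q p t) volume 0 T) :
    (∫ t in (0 : ℝ)..T, (β t / 2) * relFisher q p t = KLt q p 0 - KLt q p T) ∧
      (KLt q p T = 0 → KLt q p 0 = ∫ t in (0 : ℝ)..T, (β t / 2) * relFisher q p t) := by
  have hae := VPKL.ae_deriv_eq hβ hq hp hreg hT hint
  have hint2 : IntervalIntegrable (fun t => -(β t / 2 * relFisher q p t)) volume 0 T := by
    refine (hint.const_mul (-(1 / 2))).congr (fun t _ => ?_)
    ring
  -- The derivative of `KL` is integrable because it agrees almost everywhere with `-(β/2) I`.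
  have hk : ∫ t in (0 : ℝ)..T, -(β t / 2 * relFisher q p t) = KLt q p T - KLt q p 0 := by
    rw [← intervalIntegral.integral_eq_sub_of_hasDerivAt (f := KLt q p)
      (f' := fun t => ∫ x, deriv (fun s => q s x * Real.log (q s x / p s x)) t)
      (fun t ht => hreg.kl_hasDeriv t (by rwa [uIcc_of_le hT.le] at ht)) ?_]
    · refine intervalIntegral.integral_congr_ae ?_
      rwa [uIoc_of_le hT.le]
    · refine hint2.congr_ae ?_
      rw [uIoc_of_le hT.le]
      exact (ae_restrict_iff' measurableSet_Ioc).2 hae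
  rw [intervalIntegral.integral_neg] at hk
  exact ⟨by linarith, fun h => by linarith⟩
end

section
/- Let q and p be two admissible VP densities on [0,T] × ℝᵈ for a continuous function β : [0,T] → ℝ with β(t) ≥ 0 for all t ∈ [0,T], satisfying the regularity assumptions. Then the function t ↦ KL(t) is nonincreasing on [0,T]. -/
/-!
Along the flow `∂ₜ u = (β/2) L u`, with `L u = div (x u + ∇ u)`, the entropy density
`g = q log (q / p)` satisfies
`∂ₜ g = (β/2) ((1 + log (q / p)) L q - (q / p) L p) = (β/2) (L g - q ‖∇ log q - ∇ log p‖²)`,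
so `∂ₜ g ≤ (β/2) L g` pointwise (`vpGen_entropy`). If `∂ₜ g` is integrable, testing this inequality
against cutoffs `φ (x / R)` and moving `L` onto the cutoff leaves
`∫ g (R⁻² Δφ (x / R) - (x / R) · ∇φ (x / R))`, which tends to `0` because `g` is integrable
(`integral_nonpos_of_le_vpGen`). Hence `KL' = ∫ ∂ₜ g ≤ 0`.

The cutoff argument is used rather than the two vanishing boundary integrals because those carry no
information when their integrands fail to be integrable, in which case the Bochner integral is `0`
by convention; integrability of `∂ₜ g` alone does not give integrability of each of them.
If `∂ₜ g` itself is not integrable, the prescribed derivative of `KL` is `0`.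
-/

open MeasureTheory Real Set

/-! ### The operator `L` in coordinates -/

/-- The partial derivative `∂ᵢ f`. -/
noncomputable def pd {d : ℕ} (i : Fin d) (f : EuclideanSpace ℝ (Fin d) → ℝ)
    (x : EuclideanSpace ℝ (Fin d)) : ℝ :=
  fderiv ℝ f x (EuclideanSpace.single i 1)

/-- The operator `L u = div (x u + ∇ u)`, written in coordinates as `∑ ∂ᵢ (xᵢ u + ∂ᵢ u)`. -/
noncomputable def vpGen {d : ℕ} (u : EuclideanSpace ℝ (Fin d) → ℝ)
    (x : EuclideanSpace ℝ (Fin d)) : ℝ :=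
  ∑ i, pd i (fun y => y i * u y + pd i u y) x

section

variable {d : ℕ}

lemma contDiff_pd {n : WithTop ℕ∞} {m : WithTop ℕ∞} (h : m + 1 ≤ n)
    {f : EuclideanSpace ℝ (Fin d) → ℝ} (hf : ContDiff ℝ n f) (i : Fin d) :
    ContDiff ℝ m (pd i f) :=
  (hf.fderiv_right h).clm_apply contDiff_const

lemma hasCompactSupport_pd {f : EuclideanSpace ℝ (Fin d) → ℝ} (hf : HasCompactSupport f)
    (i : Fin d) : HasCompactSupport (pd i f) :=
  hf.fderiv_apply (𝕜 := ℝ) _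

lemma contDiff_coord {n : WithTop ℕ∞} (i : Fin d) :
    ContDiff ℝ n (fun y : EuclideanSpace ℝ (Fin d) => y i) :=
  (EuclideanSpace.proj (𝕜 := ℝ) i).contDiff

lemma gradient_apply_coord (f : EuclideanSpace ℝ (Fin d) → ℝ) (y : EuclideanSpace ℝ (Fin d))
    (i : Fin d) : gradient f y i = pd i f y := by
  have h := InnerProductSpace.toDual_symm_apply (𝕜 := ℝ) (x := EuclideanSpace.single i (1 : ℝ))
    (y := fderiv ℝ f y)
  rw [EuclideanSpace.inner_single_right] at h
  simpa [gradient, pd] using h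

lemma diverg_vpField {u : ℝ → EuclideanSpace ℝ (Fin d) → ℝ} {t : ℝ}
    (hu : ContDiff ℝ 2 (fun x => u t x)) (x : EuclideanSpace ℝ (Fin d)) :
    diverg (vpField u t) x = vpGen (u t) x := by
  have hcoord : ∀ i, (fun y => vpField u t y i) = fun y => y i * u t y + pd i (u t) y := by
    intro i
    funext y
    simp only [vpField, PiLp.add_apply, PiLp.smul_apply, smul_eq_mul, gradient_apply_coord]
    ring
  have hV : DifferentiableAt ℝ (vpField u t) x := by
    rw [differentiableAt_euclidean]
    intro i
    rw [hcoord i]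
    have h1 : ContDiff ℝ 1 (fun y => y i * u t y + pd i (u t) y) :=
      ((contDiff_coord i).mul (hu.of_le (by norm_num))).add
        (contDiff_pd (n := 2) (by norm_num) hu i)
    exact (h1.differentiable (by norm_num)) x
  unfold diverg vpGen
  refine Finset.sum_congr rfl fun i _ => ?_
  rw [pd, ← hcoord i]
  have := ((EuclideanSpace.proj (𝕜 := ℝ) i).hasFDerivAt.comp x hV.hasFDerivAt).fderiv
  have h2 : (fun y => vpField u t y i) = (EuclideanSpace.proj (𝕜 := ℝ) i) ∘ vpField u t := rfl
  rw [h2, this]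
  rfl

/-! ### Integration against cutoffs -/

/-- Integrating by parts twice moves `L` onto a compactly supported test function; the adjoint is
`φ ↦ ∑ (∂ᵢ∂ᵢ φ - xᵢ ∂ᵢ φ)`. -/
lemma integral_mul_vpGen {g φ : EuclideanSpace ℝ (Fin d) → ℝ} (hg : ContDiff ℝ 2 g)
    (hφ : ContDiff ℝ 2 φ) (hc : HasCompactSupport φ) :
    ∫ x, φ x * vpGen g x = ∫ x, (∑ i, (pd i (pd i φ) x - x i * pd i φ x)) * g x := by
  have hφ1 : ∀ i, ContDiff ℝ 1 (pd i φ) := contDiff_pd (n := 2) (by norm_num) hφ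
  have hg1 : ∀ i, ContDiff ℝ 1 (pd i g) := contDiff_pd (n := 2) (by norm_num) hg
  have hφ0 := hφ.continuous
  have hg0 := hg.continuous
  have hφ2 : ∀ i, Continuous (pd i (pd i φ)) := fun i =>
    (contDiff_pd (m := 0) (n := 1) (by norm_num) (hφ1 i) i).continuous
  have hg2 : ∀ i, Continuous (pd i (pd i g)) := fun i =>
    (contDiff_pd (m := 0) (n := 1) (by norm_num) (hg1 i) i).continuous
  have hcx : ∀ i, Continuous (fun y : EuclideanSpace ℝ (Fin d) => y i) := fun i =>
    (contDiff_coord (n := 0) i).continuous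
  have hG : ∀ i, ContDiff ℝ 1 (fun y => y i * g y + pd i g y) := fun i =>
    ((contDiff_coord i).mul (hg.of_le (by norm_num))).add (hg1 i)
  have hG' : ∀ i, Continuous (pd i (fun y => y i * g y + pd i g y)) := fun i =>
    (contDiff_pd (m := 0) (n := 1) (by norm_num) (hG i) i).continuous
  have hc1 := hasCompactSupport_pd hc
  have hc2 : ∀ i, HasCompactSupport (pd i (pd i φ)) := fun i => hasCompactSupport_pd (hc1 i) i
  -- Every product below has a compactly supported continuous factor.
  have hint : ∀ {a b : EuclideanSpace ℝ (Fin d) → ℝ}, Continuous a → Continuous b →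
      HasCompactSupport a → Integrable (fun x => a x * b x) := fun ha hb hca =>
    (ha.mul hb).integrable_of_hasCompactSupport hca.mul_right
  have key : ∀ i, ∫ x, φ x * pd i (fun y => y i * g y + pd i g y) x
      = ∫ x, (pd i (pd i φ) x - x i * pd i φ x) * g x := by
    intro i
    have e1 : ∫ x, φ x * pd i (fun y => y i * g y + pd i g y) x
        = - ∫ x, pd i φ x * (x i * g x + pd i g x) :=
      integral_mul_fderiv_eq_neg_fderiv_mul_of_integrable
        (hint (hφ1 i).continuous (hG i).continuous (hc1 i))
        (hint hφ0 (hG' i) hc) (hint hφ0 (hG i).continuous hc)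
        (fun x _ => hφ.differentiable (by norm_num) x)
        (fun x _ => (hG i).differentiable (by norm_num) x)
    have e2 : ∫ x, pd i φ x * pd i g x = - ∫ x, pd i (pd i φ) x * g x :=
      integral_mul_fderiv_eq_neg_fderiv_mul_of_integrable
        (hint (hφ2 i) hg0 (hc2 i))
        (hint (hφ1 i).continuous (hg1 i).continuous (hc1 i))
        (hint (hφ1 i).continuous hg0 (hc1 i))
        (fun x _ => (hφ1 i).differentiable (by norm_num) x)
        (fun x _ => hg.differentiable (by norm_num) x)
    have i1 : Integrable (fun x => pd i φ x * (x i * g x)) :=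
      hint (hφ1 i).continuous ((hcx i).mul hg0) (hc1 i)
    have e3 : ∫ x, pd i φ x * (x i * g x + pd i g x)
        = (∫ x, pd i φ x * (x i * g x)) + ∫ x, pd i φ x * pd i g x := by
      rw [← integral_add i1 (hint (hφ1 i).continuous (hg1 i).continuous (hc1 i))]
      simp only [mul_add]
    have e4 : ∫ x, (pd i (pd i φ) x - x i * pd i φ x) * g x
        = (∫ x, pd i (pd i φ) x * g x) - ∫ x, pd i φ x * (x i * g x) := by
      rw [← integral_sub (hint (hφ2 i) hg0 (hc2 i)) i1]
      congr 1
      funext x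
      ring
    rw [e1, e3, e2, e4]
    ring
  simp only [vpGen, Finset.mul_sum, Finset.sum_mul]
  rw [integral_finsetSum _ fun i _ => hint hφ0 (hG' i) hc, integral_finsetSum]
  · exact Finset.sum_congr rfl fun i _ => key i
  · intro i _
    refine hint ((hφ2 i).sub ((hcx i).mul (hφ1 i).continuous)) hg0 ?_
    exact (hc2 i).sub ((hc1 i).mul_left)

lemma continuous_vpGen {g : EuclideanSpace ℝ (Fin d) → ℝ} (hg : ContDiff ℝ 2 g) :
    Continuous (vpGen g) := by
  refine continuous_finsetSum _ fun i _ => ?_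
  have hG : ContDiff ℝ 1 (fun y => y i * g y + pd i g y) :=
    ((contDiff_coord i).mul (hg.of_le (by norm_num))).add
      (contDiff_pd (n := 2) (by norm_num) hg i)
  exact (contDiff_pd (m := 0) (n := 1) (by norm_num) hG i).continuous

lemma pd_comp_smul {f : EuclideanSpace ℝ (Fin d) → ℝ} (c : ℝ) (i : Fin d)
    (x : EuclideanSpace ℝ (Fin d)) :
    pd i (fun y => f (c • y)) x = c * pd i f (c • x) := by
  simp only [pd]
  rw [fderiv_comp_smul]
  simp

/-- If `h ≤ c · L g` with `h` and `g` integrable, then `∫ h ≤ 0`. No integrability of `L g` is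
needed: against the dilated cutoffs `φ (x / R)`, the adjoint of `L` produces
`R⁻² Δφ (x / R) - (x / R) · ∇φ (x / R)`, which is bounded and tends to `0` pointwise. -/
lemma integral_nonpos_of_le_vpGen {g h : EuclideanSpace ℝ (Fin d) → ℝ} {c : ℝ}
    (hg : ContDiff ℝ 2 g) (hgi : Integrable g) (hhi : Integrable h)
    (hle : ∀ x, h x ≤ c * vpGen g x) : ∫ x, h x ≤ 0 := by
  let φ : ContDiffBump (0 : EuclideanSpace ℝ (Fin d)) := ⟨1, 2, one_pos, one_lt_two⟩
  have hφ : ContDiff ℝ 2 φ := φ.contDiff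
  have hφc : HasCompactSupport φ := φ.hasCompactSupport
  have hφ1 : ∀ i, ContDiff ℝ 1 (pd i φ) := contDiff_pd (n := 2) (by norm_num) hφ
  have hφ2 : ∀ i, Continuous (pd i (pd i φ)) := fun i =>
    (contDiff_pd (m := 0) (n := 1) (by norm_num) (hφ1 i) i).continuous
  have hcx : ∀ i, Continuous (fun y : EuclideanSpace ℝ (Fin d) => y i) := fun i =>
    (contDiff_coord (n := 0) i).continuous
  have hc1 := hasCompactSupport_pd hφc
  have hc2 : ∀ i, HasCompactSupport (pd i (pd i φ)) := fun i => hasCompactSupport_pd (hc1 i) i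
  -- Uniform bounds for the two pieces of the adjoint.
  have hb1 : ∀ i, ∃ C, ∀ x, ‖pd i (pd i φ) x‖ ≤ C := fun i =>
    (hc2 i).exists_bound_of_continuous (hφ2 i)
  have hb2 : ∀ i, ∃ C, ∀ x : EuclideanSpace ℝ (Fin d), ‖x i * pd i φ x‖ ≤ C := fun i =>
    HasCompactSupport.exists_bound_of_continuous
      (f := fun x : EuclideanSpace ℝ (Fin d) => x i * pd i φ x)
      ((hc1 i).mul_left) ((hcx i).mul (hφ1 i).continuous)
  choose C₁ hC₁ using hb1
  choose C₂ hC₂ using hb2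
  -- On the unit ball the cutoff is constant, so its derivatives vanish there.
  have hone : ∀ x : EuclideanSpace ℝ (Fin d), ‖x‖ < 1 → φ =ᶠ[nhds x] fun _ => (1 : ℝ) := by
    intro x hx
    have : Metric.ball (0 : EuclideanSpace ℝ (Fin d)) 1 ∈ nhds x :=
      Metric.isOpen_ball.mem_nhds (by simpa using hx)
    filter_upwards [this] with y hy
    exact φ.one_of_mem_closedBall (Metric.ball_subset_closedBall hy)
  have hz1 : ∀ i (x : EuclideanSpace ℝ (Fin d)), ‖x‖ < 1 → pd i φ x = 0 := by
    intro i x hx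
    simp only [pd, (hone x hx).fderiv_eq]
    simp
  have hz2 : ∀ i (x : EuclideanSpace ℝ (Fin d)), ‖x‖ < 1 → pd i (pd i φ) x = 0 := by
    intro i x hx
    have : pd i φ =ᶠ[nhds x] fun _ => (0 : ℝ) := by
      have : Metric.ball (0 : EuclideanSpace ℝ (Fin d)) 1 ∈ nhds x :=
        Metric.isOpen_ball.mem_nhds (by simpa using hx)
      filter_upwards [this] with y hy
      exact hz1 i y (by simpa using hy)
    rw [pd, this.fderiv_eq]
    simp
  let r : ℕ → ℝ := fun n => 1 / ((n : ℝ) + 1)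
  have hr0 : ∀ n, 0 < r n := fun n => by positivity
  have hr1 : ∀ n, r n ≤ 1 := fun n => by
    simp only [r]
    rw [div_le_one (by positivity)]
    have : (0 : ℝ) ≤ n := n.cast_nonneg
    linarith
  have hrt : Filter.Tendsto r Filter.atTop (nhds 0) := tendsto_one_div_add_atTop_nhds_zero_nat
  have hsmall : ∀ x : EuclideanSpace ℝ (Fin d), ∀ᶠ n in Filter.atTop, ‖r n • x‖ < 1 := by
    intro x
    have : Filter.Tendsto (fun n => ‖r n • x‖) Filter.atTop (nhds ‖(0 : ℝ) • x‖) :=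
      (hrt.smul_const x).norm
    exact this.eventually_lt_const (by simp)
  let ψ : ℕ → EuclideanSpace ℝ (Fin d) → ℝ := fun n x => φ (r n • x)
  have hψ : ∀ n, ContDiff ℝ 2 (ψ n) := fun n => hφ.comp (contDiff_const_smul (r n))
  have hψc : ∀ n, HasCompactSupport (ψ n) := fun n => hφc.comp_smul (hr0 n).ne'
  have hψ1 : ∀ n i, pd i (ψ n) = fun x => r n * pd i φ (r n • x) := fun n i => by
    funext x
    exact pd_comp_smul (r n) i x
  have hψ2 : ∀ n i x, pd i (pd i (ψ n)) x = r n ^ 2 * pd i (pd i φ) (r n • x) := by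
    intro n i x
    have hd : DifferentiableAt ℝ (fun y => pd i φ (r n • y)) x :=
      (((hφ1 i).comp (contDiff_const_smul (r n))).differentiable (by norm_num)) x
    have h1 : pd i (fun y => r n * pd i φ (r n • y)) x =
        r n * pd i (fun y => pd i φ (r n • y)) x := by
      simp only [pd] at hd ⊢
      rw [fderiv_const_mul hd]
      simp
    rw [hψ1, h1, pd_comp_smul]
    ring
  have hadj : ∀ n x, (∑ i, (pd i (pd i (ψ n)) x - x i * pd i (ψ n) x)) =
      ∑ i, (r n ^ 2 * pd i (pd i φ) (r n • x) - (r n • x) i * pd i φ (r n • x)) := by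
    intro n x
    refine Finset.sum_congr rfl fun i _ => ?_
    rw [hψ2, hψ1]
    simp only [PiLp.smul_apply, smul_eq_mul]
    ring
  have hlim1 : Filter.Tendsto
      (fun n => ∫ x, (∑ i, (pd i (pd i (ψ n)) x - x i * pd i (ψ n) x)) * g x)
      Filter.atTop (nhds (∫ _ : EuclideanSpace ℝ (Fin d), (0 : ℝ))) := by
    refine tendsto_integral_of_dominated_convergence (fun x => (∑ i, (C₁ i + C₂ i)) * ‖g x‖)
      ?_ (hgi.norm.const_mul _) ?_ ?_
    · intro n
      simp only [hadj]
      refine Continuous.aestronglyMeasurable ?_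
      refine (continuous_finsetSum _ fun i _ => ?_).mul hg.continuous
      have hs : Continuous fun x : EuclideanSpace ℝ (Fin d) => r n • x := continuous_const_smul _
      exact (((hφ2 i).comp hs).const_mul _).sub
        (((hcx i).comp hs).mul ((hφ1 i).continuous.comp hs))
    · intro n
      refine Filter.Eventually.of_forall fun x => ?_
      rw [hadj, norm_mul]
      refine mul_le_mul_of_nonneg_right ?_ (norm_nonneg _)
      refine (norm_sum_le _ _).trans (Finset.sum_le_sum fun i _ => ?_)
      refine (norm_sub_le _ _).trans (add_le_add ?_ (hC₂ i _))
      rw [norm_mul]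
      have : ‖r n ^ 2‖ ≤ 1 := by
        rw [Real.norm_of_nonneg (by positivity)]
        exact pow_le_one₀ (hr0 n).le (hr1 n)
      calc _ ≤ 1 * ‖pd i (pd i φ) (r n • x)‖ := by gcongr
        _ ≤ C₁ i := by rw [one_mul]; exact hC₁ i _
    · refine Filter.Eventually.of_forall fun x => ?_
      refine tendsto_const_nhds.congr' ?_
      filter_upwards [hsmall x] with n hn
      rw [hadj]
      simp [hz1 _ _ hn, hz2 _ _ hn]
  have hlim2 : Filter.Tendsto (fun n => ∫ x, ψ n x * h x) Filter.atTop (nhds (∫ x, h x)) := by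
    refine tendsto_integral_of_dominated_convergence (fun x => ‖h x‖) ?_ hhi.norm ?_ ?_
    · intro n
      exact (hψ n).continuous.aestronglyMeasurable.mul hhi.aestronglyMeasurable
    · intro n
      refine Filter.Eventually.of_forall fun x => ?_
      rw [norm_mul, Real.norm_of_nonneg φ.nonneg]
      exact mul_le_of_le_one_left (norm_nonneg _) φ.le_one
    · refine Filter.Eventually.of_forall fun x => ?_
      refine tendsto_const_nhds.congr' ?_
      filter_upwards [hsmall x] with n hn
      have := (hone _ hn).eq_of_nhds
      simp only [ψ, this, one_mul]
  rw [integral_zero] at hlim1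
  have hlim1' := hlim1.const_mul c
  rw [mul_zero] at hlim1'
  refine le_of_tendsto_of_tendsto' hlim2 hlim1' fun n => ?_
  rw [← integral_mul_vpGen hg (hψ n) (hψc n), ← integral_const_mul]
  refine integral_mono ?_ ?_ fun x => ?_
  · exact hhi.bdd_mul (c := 1) (hψ n).continuous.aestronglyMeasurable
      (Filter.Eventually.of_forall fun x => by
        rw [Real.norm_of_nonneg φ.nonneg]
        exact φ.le_one)
  · exact (((hψ n).continuous.mul (continuous_vpGen hg)).integrable_of_hasCompactSupport
      (hψc n).mul_right).const_mul c
  · calc ψ n x * h x ≤ ψ n x * (c * vpGen g x) :=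
          mul_le_mul_of_nonneg_left (hle x) φ.nonneg
      _ = c * (ψ n x * vpGen g x) := by ring

/-! ### Entropy dissipation -/

/-- The pointwise entropy inequality for `L`: writing `r = log (q / p)`, the difference of the two
sides is `q ‖∇ log q - ∇ log p‖²`. -/
lemma vpGen_entropy {q p : EuclideanSpace ℝ (Fin d) → ℝ} (hq : ContDiff ℝ 2 q)
    (hp : ContDiff ℝ 2 p) (hq0 : ∀ x, 0 < q x) (hp0 : ∀ x, 0 < p x)
    (x : EuclideanSpace ℝ (Fin d)) :
    (1 + Real.log (q x / p x)) * vpGen q x - q x / p x * vpGen p x ≤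
      vpGen (fun y => q y * Real.log (q y / p y)) x := by
  have hdq : ∀ y, HasFDerivAt q (fderiv ℝ q y) y := fun y =>
    (hq.differentiable (by norm_num) y).hasFDerivAt
  have hdp : ∀ y, HasFDerivAt p (fderiv ℝ p y) y := fun y =>
    (hp.differentiable (by norm_num) y).hasFDerivAt
  have hl : (fun y => q y * Real.log (q y / p y)) =
      fun y => q y * (Real.log (q y) - Real.log (p y)) := by
    funext y
    rw [Real.log_div (hq0 y).ne' (hp0 y).ne']
  have hpd : ∀ i, pd i (fun y => q y * (Real.log (q y) - Real.log (p y))) = fun y =>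
      (1 + (Real.log (q y) - Real.log (p y))) * pd i q y - q y * (p y)⁻¹ * pd i p y := by
    intro i
    funext y
    have := ((hdq y).fun_mul (((hdq y).log (hq0 y).ne').fun_sub ((hdp y).log (hp0 y).ne'))).fderiv
    have hqy := (hq0 y).ne'
    have hpy := (hp0 y).ne'
    simp only [pd, this]
    simp
    field_simp
    ring
  rw [hl, Real.log_div (hq0 x).ne' (hp0 x).ne']
  simp only [vpGen, Finset.mul_sum, ← Finset.sum_sub_distrib]
  refine Finset.sum_le_sum fun i _ => ?_
  have hx : HasFDerivAt (fun y : EuclideanSpace ℝ (Fin d) => y i)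
      (EuclideanSpace.proj (𝕜 := ℝ) i : EuclideanSpace ℝ (Fin d) →L[ℝ] ℝ) x :=
    (EuclideanSpace.proj (𝕜 := ℝ) i : EuclideanSpace ℝ (Fin d) →L[ℝ] ℝ).hasFDerivAt
  have hdq2 : HasFDerivAt (pd i q) (fderiv ℝ (pd i q) x) x :=
    ((contDiff_pd (m := 1) (n := 2) (by norm_num) hq i).differentiable
      (by norm_num) x).hasFDerivAt
  have hdp2 : HasFDerivAt (pd i p) (fderiv ℝ (pd i p) x) x :=
    ((contDiff_pd (m := 1) (n := 2) (by norm_num) hp i).differentiable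
      (by norm_num) x).hasFDerivAt
  have hlog := ((hdq x).log (hq0 x).ne').fun_sub ((hdp x).log (hp0 x).ne')
  have hinv : HasFDerivAt (fun y => (p y)⁻¹) (-((p x ^ 2)⁻¹) • fderiv ℝ p x) x :=
    (hasDerivAt_inv (hp0 x).ne').comp_hasFDerivAt x (hdp x)
  have e1 := ((hx.fun_mul (hdq x)).fun_add hdq2).fderiv
  have e2 := ((hx.fun_mul (hdp x)).fun_add hdp2).fderiv
  have e3 := ((hx.fun_mul ((hdq x).fun_mul hlog)).fun_add
    (((hlog.const_add 1).fun_mul hdq2).fun_sub (((hdq x).fun_mul hinv).fun_mul hdp2))).fderiv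
  rw [hpd i]
  rw [pd, e1, pd, e2, pd, e3]
  have hqx := hq0 x
  have hpx := hp0 x
  have hsq : 0 ≤ q x * (pd i q x / q x - pd i p x / p x) ^ 2 := by positivity
  rw [← sub_nonneg]
  refine hsq.trans_eq ?_
  simp [pd]
  field_simp
  ring

end

/-- **Monotonicity of the KL divergence along the VP diffusion.**
For admissible VP densities `q, p` (with `β ≥ 0` on `[0,T]`) satisfying the regularity
assumptions, `t ↦ KL(t)` is nonincreasing on `[0,T]`. -/
theorem kl_antitoneOn
    {d : ℕ} (hd : 1 ≤ d) {T : ℝ} (hT : 0 < T) {β : ℝ → ℝ} (hβ : Continuous β)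
    (hβnonneg : ∀ t ∈ Icc (0 : ℝ) T, 0 ≤ β t)
    {q p : ℝ → EuclideanSpace ℝ (Fin d) → ℝ}
    (hq : AdmissibleVP d T β q) (hp : AdmissibleVP d T β p)
    (hreg : VPReg d T q p) :
    AntitoneOn (KLt q p) (Icc (0 : ℝ) T) := by
  have key : ∀ t ∈ Icc (0 : ℝ) T,
      ∫ x, deriv (fun s => q s x * Real.log (q s x / p s x)) t ≤ 0 := by
    intro t ht
    have hq0 := hq.pos t ht
    have hp0 := hp.pos t ht
    have hqx : ContDiff ℝ 2 (q t) := hq.contDiff_x t ht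
    have hpx : ContDiff ℝ 2 (p t) := hp.contDiff_x t ht
    by_cases hint : Integrable (fun x => deriv (fun s => q s x * Real.log (q s x / p s x)) t)
    swap
    · exact (integral_undef hint).le
    have hg : ContDiff ℝ 2 (fun x => q t x * Real.log (q t x / p t x)) :=
      hqx.mul ((hqx.div hpx fun x => (hp0 x).ne').log fun x => (div_pos (hq0 x) (hp0 x)).ne')
    have hgi : Integrable (fun x => q t x * Real.log (q t x / p t x)) := by
      refine (hreg.int_kl t ht).mono' hg.continuous.aestronglyMeasurable
        (Filter.Eventually.of_forall fun x => ?_)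
      rw [norm_mul, Real.norm_of_nonneg (hq0 x).le, Real.norm_eq_abs]
    refine integral_nonpos_of_le_vpGen (c := β t / 2) hg hgi hint fun x => ?_
    have hdq : HasDerivAt (fun s => q s x) (β t / 2 * vpGen (q t) x) t := by
      rw [← diverg_vpField (hq.contDiff_x t ht), ← hq.fokkerPlanck t ht x]
      exact ((hq.contDiff_t x).differentiable (by norm_num) t).hasDerivAt
    have hdp : HasDerivAt (fun s => p s x) (β t / 2 * vpGen (p t) x) t := by
      rw [← diverg_vpField (hp.contDiff_x t ht), ← hp.fokkerPlanck t ht x]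
      exact ((hp.contDiff_t x).differentiable (by norm_num) t).hasDerivAt
    have hqn := (hq0 x).ne'
    have hpn := (hp0 x).ne'
    have hd := (hdq.fun_mul ((hdq.fun_div hdp hpn).log (div_ne_zero hqn hpn))).deriv
    rw [hd]
    refine le_of_eq_of_le ?_ (mul_le_mul_of_nonneg_left (vpGen_entropy hqx hpx hq0 hp0 x)
      (div_nonneg (hβnonneg t ht) zero_le_two))
    field_simp
    ring
  refine antitoneOn_of_deriv_nonpos (convex_Icc 0 T)
    (fun t ht => (hreg.kl_hasDeriv t ht).continuousAt.continuousWithinAt) ?_ ?_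
  · intro t ht
    exact (hreg.kl_hasDeriv t (interior_subset ht)).differentiableAt.differentiableWithinAt
  · intro t ht
    rw [(hreg.kl_hasDeriv t (interior_subset ht)).deriv]
    exact key t (interior_subset ht)
end
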